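/- arXiv:2402.19067 — 2 statements merged into one kernel-verified Lean document; each statement's English description precedes it below -/
import Mathlib

section
/- Let Y be a locally asymptotically midpoint uniformly convex (locally AMUC) real Banach space which has either (i) a normalized, symmetric basic sequence which is not equivalent to the unit vector basis of ℓ_1, or (ii) a normalized sequence with upper p-estimates for some 1 < p < ∞. Then Y fails Lindenstrauss' property B, i.e., there exists a Banach space X such that the set of norm-attaining operators from X to Y is not dense in the space of all bounded linear operators from X to Y. -/
open Filter Topology

/-- The asymptotic midpoint modulus `δ̃_Y(y,t)`: the supremum, over all closed
finite-codimensional subspaces `E` of `Y`, of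
`inf_{z ∈ S_E} max {‖y + t z‖, ‖y - t z‖} - 1`. -/
noncomputable def deltaTilde (Y : Type*) [NormedAddCommGroup Y] [NormedSpace ℝ Y]
    (y : Y) (t : ℝ) : ℝ :=
  sSup {r : ℝ | ∃ E : Submodule ℝ Y, IsClosed (E : Set Y) ∧ FiniteDimensional ℝ (Y ⧸ E) ∧
    r = sInf {m : ℝ | ∃ z : Y, z ∈ E ∧ ‖z‖ = 1 ∧ m = max ‖y + t • z‖ ‖y - t • z‖} - 1}

/-- A Banach space `Y` is locally asymptotically midpoint uniformly convex (locally AMUC)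
if `δ̃_Y(y,t) > 0` for every `y ∈ S_Y` and every `t > 0`. -/
def LocallyAMUC (Y : Type*) [NormedAddCommGroup Y] [NormedSpace ℝ Y] : Prop :=
  ∀ y : Y, ‖y‖ = 1 → ∀ t : ℝ, 0 < t → 0 < deltaTilde Y y t

/-- `(y n)` is a basic sequence: it is a Schauder basis of the closed linear span of its
range, i.e. every element of that closed span has a unique representation as a norm
convergent series `∑ aₖ yₖ`. -/
def IsBasicSeq {Y : Type*} [NormedAddCommGroup Y] [NormedSpace ℝ Y] (y : ℕ → Y) : Prop :=
  ∀ x ∈ closure ((Submodule.span ℝ (Set.range y) : Submodule ℝ Y) : Set Y),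
    ∃! a : ℕ → ℝ,
      Filter.Tendsto (fun n => ∑ k ∈ Finset.range n, a k • y k) Filter.atTop (nhds x)

/-- Two sequences are equivalent if a series `∑ aₖ yₖ` converges exactly when the
series `∑ aₖ zₖ` converges. -/
def SeqEquivalent {Y Z : Type*} [NormedAddCommGroup Y] [NormedSpace ℝ Y]
    [NormedAddCommGroup Z] [NormedSpace ℝ Z] (y : ℕ → Y) (z : ℕ → Z) : Prop :=
  ∀ a : ℕ → ℝ,
    (∃ x : Y, Filter.Tendsto (fun n => ∑ k ∈ Finset.range n, a k • y k)
      Filter.atTop (nhds x)) ↔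
    (∃ x : Z, Filter.Tendsto (fun n => ∑ k ∈ Finset.range n, a k • z k)
      Filter.atTop (nhds x))

/-- `(y n)` is a symmetric basic sequence: it is basic and every permutation of it is a
basic sequence equivalent to it. -/
def IsSymmetricBasicSeq {Y : Type*} [NormedAddCommGroup Y] [NormedSpace ℝ Y]
    (y : ℕ → Y) : Prop :=
  IsBasicSeq y ∧ ∀ σ : Equiv.Perm ℕ, IsBasicSeq (y ∘ σ) ∧ SeqEquivalent (y ∘ σ) y

/-- `(y n)` is equivalent to the unit vector basis of `ℓ₁`: there is `c > 0` with
`‖∑ aₖ yₖ‖ ≥ c ∑ |aₖ|` for all finitely supported scalars. -/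
def EquivL1UnitBasis {Y : Type*} [NormedAddCommGroup Y] [NormedSpace ℝ Y]
    (y : ℕ → Y) : Prop :=
  ∃ c : ℝ, 0 < c ∧ ∀ (n : ℕ) (a : ℕ → ℝ),
    c * ∑ k ∈ Finset.range n, |a k| ≤ ‖∑ k ∈ Finset.range n, a k • y k‖

/-- A normalized sequence `(y n)` has upper `p`-estimates if there is `C > 0` with
`‖∑_{k=1}^n aₖ yₖ‖ ≤ C (∑_{k=1}^n |aₖ|^p)^(1/p)` for all `n` and all scalars. -/
def HasUpperPEstimates {Y : Type*} [NormedAddCommGroup Y] [NormedSpace ℝ Y]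
    (p : ℝ) (y : ℕ → Y) : Prop :=
  ∃ C : ℝ, 0 < C ∧ ∀ (n : ℕ) (a : ℕ → ℝ),
    ‖∑ k ∈ Finset.range n, a k • y k‖ ≤
      C * (∑ k ∈ Finset.range n, |a k| ^ p) ^ (1 / p)

/-- The set of norm-attaining bounded linear operators from `X` to `Y`. -/
def NormAttainingOps (X Y : Type*) [NormedAddCommGroup X] [NormedSpace ℝ X]
    [NormedAddCommGroup Y] [NormedSpace ℝ Y] : Set (X →L[ℝ] Y) :=
  {T | ∃ x : X, ‖x‖ ≤ 1 ∧ ‖T x‖ = ‖T‖}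

/-- `Y` has Lindenstrauss' property B if, for every Banach space `X`, the norm-attaining
operators are dense (in operator norm) in the space of all bounded linear operators from
`X` to `Y`. -/
def PropertyB (Y : Type*) [NormedAddCommGroup Y] [NormedSpace ℝ Y] : Prop :=
  ∀ (X : Type) (_ : NormedAddCommGroup X), ∀ (_ : NormedSpace ℝ X) (_ : CompleteSpace X),
    Dense (NormAttainingOps X Y)


/-- Banach: a basic sequence has a finite basis constant. -/
lemma basis_constant {Y : Type} [NormedAddCommGroup Y] [NormedSpace ℝ Y] [CompleteSpace Y]
    (y : ℕ → Y) (hy : ∀ n, ‖y n‖ = 1) (hb : IsBasicSeq y) :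
    ∃ K : ℝ, 0 < K ∧ ∀ (a : ℕ → ℝ) (n m : ℕ), n ≤ m →
      ‖∑ k ∈ Finset.range n, a k • y k‖ ≤ K * ‖∑ k ∈ Finset.range m, a k • y k‖ := by
  classical
  let V : Submodule ℝ C(OnePoint ℕ, Y) :=
    { carrier := {f | f ((0 : ℕ) : OnePoint ℕ) = 0 ∧
        ∀ n : ℕ, f ((n + 1 : ℕ) : OnePoint ℕ) - f (n : OnePoint ℕ) ∈ Submodule.span ℝ {y n}}
      add_mem' := by
        rintro f g ⟨h1, h2⟩ ⟨h3, h4⟩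
        refine ⟨by simp [h1, h3], fun n => ?_⟩
        have := Submodule.add_mem _ (h2 n) (h4 n)
        simp only [ContinuousMap.add_apply]
        convert this using 1
        abel
      zero_mem' := by
        refine ⟨by simp, fun n => ?_⟩
        simp
      smul_mem' := by
        rintro c f ⟨h1, h2⟩
        refine ⟨by simp [h1], fun n => ?_⟩
        have := Submodule.smul_mem _ c (h2 n)
        simpa [smul_sub] using this }
  have hVc : IsClosed (V : Set C(OnePoint ℕ, Y)) := by
    have : (V : Set C(OnePoint ℕ, Y)) = {f | f ((0 : ℕ) : OnePoint ℕ) = 0} ∩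
        ⋂ n : ℕ, {f | f ((n + 1 : ℕ) : OnePoint ℕ) - f (n : OnePoint ℕ) ∈
          (Submodule.span ℝ {y n} : Set Y)} := by
      ext f
      simp [V]
    rw [this]
    refine IsClosed.inter (isClosed_eq (by fun_prop) continuous_const) (isClosed_iInter fun n => ?_)
    exact (Submodule.closed_of_finiteDimensional (Submodule.span ℝ {y n})).preimage
      (f := fun f : C(OnePoint ℕ, Y) => f ((n + 1 : ℕ) : OnePoint ℕ) - f (n : OnePoint ℕ))
      (by fun_prop)
  let Z := (Submodule.span ℝ (Set.range y)).topologicalClosure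
  have hlim : ∀ f : C(OnePoint ℕ, Y), Tendsto (fun n : ℕ => f (n : OnePoint ℕ)) atTop
      (𝓝 (f OnePoint.infty)) := fun f =>
    (OnePoint.continuous_iff_from_nat f).1 f.continuous
  have hcoef : ∀ f : C(OnePoint ℕ, Y), f ∈ V → ∃ b : ℕ → ℝ, ∀ n : ℕ,
      f (n : OnePoint ℕ) = ∑ k ∈ Finset.range n, b k • y k := by
    rintro f ⟨h1, h2⟩
    simp only [Submodule.mem_span_singleton] at h2
    choose b hb using h2
    refine ⟨b, fun n => ?_⟩
    induction n with
    | zero => simpa using h1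
    | succ n ih => rw [Finset.sum_range_succ, ← ih, hb]; abel
  have hspan : ∀ (b : ℕ → ℝ) (n : ℕ),
      ∑ k ∈ Finset.range n, b k • y k ∈ Submodule.span ℝ (Set.range y) := fun b n =>
    Submodule.sum_mem _ fun k _ => Submodule.smul_mem _ _ (Submodule.subset_span ⟨k, rfl⟩)
  have hmem : ∀ f : V, (f : C(OnePoint ℕ, Y)) OnePoint.infty ∈ Z := by
    rintro ⟨f, hf⟩
    obtain ⟨b, hb⟩ := hcoef f hf
    refine mem_closure_of_tendsto (hlim f) (Eventually.of_forall fun n => ?_)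
    rw [hb]
    exact hspan b n
  let ev : C(OnePoint ℕ, Y) →L[ℝ] Y := ContinuousMap.evalCLM ℝ OnePoint.infty
  let Φ : V →L[ℝ] Z := (ev.comp V.subtypeL).codRestrict Z (fun f => hmem f)
  have : CompleteSpace V := hVc.completeSpace_coe
  have : CompleteSpace Z := (Submodule.isClosed_topologicalClosure _).completeSpace_coe
  have hsurj : Function.Surjective Φ := by
    rintro ⟨x, hx⟩
    obtain ⟨a, ha, -⟩ := hb x hx
    let f : C(OnePoint ℕ, Y) := OnePoint.continuousMapMkNat _ _ ha
    have hfn : ∀ n : ℕ, f (n : OnePoint ℕ) = ∑ k ∈ Finset.range n, a k • y k := fun n => rfl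
    refine ⟨⟨f, ?_, fun n => ?_⟩, ?_⟩
    · rw [hfn]; simp
    · rw [hfn, hfn, Finset.sum_range_succ, add_sub_cancel_left]
      exact Submodule.smul_mem _ _ (Submodule.mem_span_singleton_self _)
    · apply Subtype.ext
      rfl
  obtain ⟨C, hC, hΦ⟩ := Φ.exists_preimage_norm_le hsurj
  refine ⟨C, hC, fun a n m hnm => ?_⟩
  set x := ∑ k ∈ Finset.range m, a k • y k with hx
  have hxZ : x ∈ Z := Submodule.le_topologicalClosure _ (hspan a m)
  obtain ⟨⟨f, hf⟩, hfx, hfn⟩ := hΦ ⟨x, hxZ⟩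
  obtain ⟨b, hbf⟩ := hcoef f hf
  have hfx' : f OnePoint.infty = x := congrArg Subtype.val hfx
  let a' : ℕ → ℝ := fun k => if k < m then a k else 0
  have ha' : ∀ n ≤ m, ∑ k ∈ Finset.range n, a' k • y k = ∑ k ∈ Finset.range n, a k • y k := by
    intro n hn
    refine Finset.sum_congr rfl fun k hk => ?_
    have : k < m := lt_of_lt_of_le (Finset.mem_range.1 hk) hn
    simp [a', this]
  have h1 : Tendsto (fun n => ∑ k ∈ Finset.range n, a' k • y k) atTop (𝓝 x) := by
    refine tendsto_const_nhds.congr' ?_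
    filter_upwards [eventually_ge_atTop m] with n hn
    rw [hx, ← ha' m le_rfl]
    refine Finset.sum_subset (Finset.range_mono hn) fun k _ hk => ?_
    have : ¬ k < m := by simpa using hk
    simp [a', this]
  have h2 : Tendsto (fun n => ∑ k ∈ Finset.range n, b k • y k) atTop (𝓝 x) := by
    rw [← hfx']
    exact (hlim f).congr hbf
  have hab : b = a' := (hb x hxZ).unique h2 h1
  rw [← ha' n hnm, ← hab, ← hbf]
  calc ‖f (n : OnePoint ℕ)‖ ≤ ‖f‖ := f.norm_coe_le_norm _
    _ ≤ C * ‖x‖ := hfn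

lemma coef_bound {Y : Type} [NormedAddCommGroup Y] [NormedSpace ℝ Y]
    (y : ℕ → Y) (hy : ∀ n, ‖y n‖ = 1) (K : ℝ)
    (hK : ∀ (a : ℕ → ℝ) (n m : ℕ), n ≤ m →
      ‖∑ k ∈ Finset.range n, a k • y k‖ ≤ K * ‖∑ k ∈ Finset.range m, a k • y k‖)
    (a : ℕ → ℝ) (m k : ℕ) (hk : k < m) :
    |a k| ≤ 2 * K * ‖∑ k ∈ Finset.range m, a k • y k‖ := by
  have h1 := hK a k m hk.le
  have h2 := hK a (k + 1) m hk
  have h3 : a k • y k = ∑ k ∈ Finset.range (k + 1), a k • y k - ∑ k ∈ Finset.range k, a k • y k := by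
    rw [Finset.sum_range_succ]; abel
  have h4 : |a k| = ‖a k • y k‖ := by rw [norm_smul, hy, mul_one, Real.norm_eq_abs]
  rw [h4, h3]
  refine (norm_sub_le _ _).trans ?_
  linarith

lemma hump_step {Y : Type} [NormedAddCommGroup Y] [NormedSpace ℝ Y]
    (y : ℕ → Y) (hy : ∀ n, ‖y n‖ = 1) (K : ℝ) (hK0 : 0 < K)
    (hK : ∀ (a : ℕ → ℝ) (n m : ℕ), n ≤ m →
      ‖∑ k ∈ Finset.range n, a k • y k‖ ≤ K * ‖∑ k ∈ Finset.range m, a k • y k‖)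
    (hunb : ∀ M : ℝ, ∃ (σ : Equiv.Perm ℕ) (m : ℕ) (a : ℕ → ℝ),
      M * ‖∑ k ∈ Finset.range m, a k • y k‖ < ‖∑ k ∈ Finset.range m, a k • y (σ k)‖)
    (N : ℕ) : ∃ (N' : ℕ) (τ : Equiv.Perm ℕ) (c : ℕ → ℝ), N < N' ∧
      (∀ k, N ≤ k → k < N' → N ≤ τ k ∧ τ k < N') ∧
      (∀ k, N ≤ k → k < N' → N ≤ τ.symm k ∧ τ.symm k < N') ∧
      (∀ k, k < N → c k = 0) ∧
      ‖∑ k ∈ Finset.Ico N N', c k • y k‖ ≤ (1 / 2) ^ N ∧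
      1 ≤ ‖∑ k ∈ Finset.Ico N N', c k • y (τ k)‖ := by
  classical
  obtain ⟨σ, m, a, hσ⟩ := hunb (4 * K * N + 2 ^ N * (1 + 4 * K * N))
  set D := ‖∑ k ∈ Finset.range m, a k • y k‖ with hD
  have hD0 : 0 ≤ D := norm_nonneg _
  have ha : ∀ k ∈ Finset.range m, |a k| ≤ 2 * K * D := fun k hk =>
    coef_bound y hy K hK a m k (Finset.mem_range.1 hk)
  let N' := N + m + 1 + ∑ k ∈ Finset.range m, (σ k + 1)
  have hσN' : ∀ k < m, σ k < N' := by
    intro k hk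
    have := Finset.single_le_sum (f := fun k => σ k + 1) (fun i _ => Nat.zero_le _)
      (Finset.mem_range.2 hk)
    simp only [N'] at this ⊢
    omega
  let R := (Finset.range m).filter (fun k => N ≤ k ∧ N ≤ σ k)
  let Q := (Finset.range m).filter (fun k => ¬ (N ≤ k ∧ N ≤ σ k))
  have hQcard : (Q.card : ℝ) ≤ 2 * N := by
    have h1 : Q ⊆ Finset.range N ∪ (Finset.range N).image σ.symm := by
      intro k hk
      simp only [Q, Finset.mem_filter, Finset.mem_range, not_and_or, not_le] at hk
      simp only [Finset.mem_union, Finset.mem_range, Finset.mem_image]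
      rcases hk.2 with h | h
      · exact Or.inl h
      · exact Or.inr ⟨σ k, h, by simp⟩
    have h2 := Finset.card_le_card h1
    have h3 := Finset.card_union_le (Finset.range N) ((Finset.range N).image σ.symm)
    have h4 := Finset.card_image_le (s := Finset.range N) (f := σ.symm)
    rw [Finset.card_range] at h3 h4
    have : Q.card ≤ 2 * N := by omega
    exact_mod_cast this
  have hQ : ∀ z : ℕ → Y, (∀ k, ‖z k‖ = 1) → ‖∑ k ∈ Q, a k • z k‖ ≤ 4 * K * N * D := by
    intro z hz
    calc ‖∑ k ∈ Q, a k • z k‖ ≤ ∑ k ∈ Q, 2 * K * D := by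
          refine norm_sum_le_of_le _ fun k hk => ?_
          rw [norm_smul, hz, mul_one, Real.norm_eq_abs]
          exact ha k (Finset.mem_filter.1 hk).1
      _ = Q.card * (2 * K * D) := by rw [Finset.sum_const, nsmul_eq_mul]
      _ ≤ (2 * N) * (2 * K * D) := by gcongr
      _ = _ := by ring
  have hsplit : ∀ z : ℕ → Y, ∑ k ∈ R, a k • z k =
      ∑ k ∈ Finset.range m, a k • z k - ∑ k ∈ Q, a k • z k := by
    intro z
    rw [eq_sub_iff_add_eq]
    exact Finset.sum_filter_add_sum_filter_not _ _ _
  have hsrc : ‖∑ k ∈ R, a k • y k‖ ≤ (1 + 4 * K * N) * D := by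
    rw [hsplit]
    refine (norm_sub_le _ _).trans ?_
    have := hQ y hy
    linarith
  have htgt : 2 ^ N * ((1 + 4 * K * N) * D) < ‖∑ k ∈ R, a k • y (σ k)‖ := by
    rw [hsplit (fun k => y (σ k))]
    have h1 := hQ (fun k => y (σ k)) (fun k => hy _)
    have h2 := norm_sub_norm_le (∑ k ∈ Finset.range m, a k • y (σ k)) (∑ k ∈ Q, a k • y (σ k))
    linarith
  set t := ‖∑ k ∈ R, a k • y (σ k)‖ with ht
  have ht0 : 0 < t := lt_of_le_of_lt (by positivity) htgt
  -- the permutation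
  have hRI : ∀ k ∈ R, k ∈ Finset.Ico N N' := by
    intro k hk
    simp only [R, Finset.mem_filter, Finset.mem_range] at hk
    simp only [Finset.mem_Ico, N']
    omega
  have hRI' : ∀ k ∈ R, σ k ∈ Finset.Ico N N' := by
    intro k hk
    simp only [R, Finset.mem_filter, Finset.mem_range] at hk
    simp only [Finset.mem_Ico]
    exact ⟨hk.2.2, hσN' k hk.1⟩
  obtain ⟨g, hg⟩ := Finset.exists_equiv_extend_of_card_eq (α := ↥(Finset.Ico N N'))
    (t := Finset.Ico N N') (by simp) (s := R.subtype (· ∈ Finset.Ico N N'))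
    (f := fun k => σ k)
    (by
      intro k hk
      simp only [Finset.mem_image, Finset.mem_subtype] at hk
      obtain ⟨i, hi, rfl⟩ := hk
      exact hRI' _ hi)
    (by
      intro i _ j _ hij
      exact Subtype.ext (σ.injective hij))
  let τ : Equiv.Perm ℕ := Equiv.Perm.ofSubtype (p := (· ∈ Finset.Ico N N')) g
  have hτ : ∀ k (hk : k ∈ Finset.Ico N N'), τ k = g ⟨k, hk⟩ := fun k hk =>
    Equiv.Perm.ofSubtype_apply_of_mem g hk
  have hτ1 : ∀ k, N ≤ k → k < N' → N ≤ τ k ∧ τ k < N' := by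
    intro k h1 h2
    rw [hτ k (Finset.mem_Ico.2 ⟨h1, h2⟩)]
    exact Finset.mem_Ico.1 (g _).2
  have hτ2 : ∀ k, N ≤ k → k < N' → N ≤ τ.symm k ∧ τ.symm k < N' := by
    intro k h1 h2
    by_contra hcon
    have h3 : τ (τ.symm k) = τ.symm k :=
      Equiv.Perm.ofSubtype_apply_of_not_mem g (by simpa using hcon)
    rw [Equiv.apply_symm_apply] at h3
    rw [← h3] at hcon
    exact hcon ⟨h1, h2⟩
  let c : ℕ → ℝ := fun k => if k ∈ R then t⁻¹ * a k else 0
  have hc : ∀ z : ℕ → Y, ∑ k ∈ Finset.Ico N N', c k • z k = t⁻¹ • ∑ k ∈ R, a k • z k := by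
    intro z
    rw [Finset.smul_sum]
    symm
    rw [← Finset.sum_subset (s₁ := R) (s₂ := Finset.Ico N N') hRI]
    · refine Finset.sum_congr rfl fun k hk => ?_
      simp [c, hk, mul_smul]
    · intro k _ hk
      simp [c, hk]
  refine ⟨N', τ, c, by simp only [N']; omega, hτ1, hτ2, ?_, ?_, ?_⟩
  · intro k hk
    have : k ∉ R := fun h => by
      have := Finset.mem_Ico.1 (hRI k h)
      omega
    simp [c, this]
  · rw [hc, norm_smul, norm_inv, Real.norm_of_nonneg ht0.le, inv_mul_le_iff₀ ht0]
    refine hsrc.trans ?_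
    have h2 : (0 : ℝ) < 2 ^ N := by positivity
    rw [one_div, inv_pow, ← div_eq_mul_inv, le_div_iff₀ h2]
    linarith
  · have h1 : ∑ k ∈ R, a k • y (τ k) = ∑ k ∈ R, a k • y (σ k) := by
      refine Finset.sum_congr rfl fun k hk => ?_
      rw [hτ k (hRI k hk), hg ⟨k, hRI k hk⟩ (by simpa using hk)]
    rw [hc (fun k => y (τ k)), h1, norm_smul, norm_inv, Real.norm_of_nonneg ht0.le, ← ht,
      inv_mul_cancel₀ ht0.ne']

lemma uniform_symm {Y : Type} [NormedAddCommGroup Y] [NormedSpace ℝ Y] [CompleteSpace Y]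
    (y : ℕ → Y) (hy : ∀ n, ‖y n‖ = 1) (K : ℝ) (hK0 : 0 < K)
    (hK : ∀ (a : ℕ → ℝ) (n m : ℕ), n ≤ m →
      ‖∑ k ∈ Finset.range n, a k • y k‖ ≤ K * ‖∑ k ∈ Finset.range m, a k • y k‖)
    (hs : ∀ σ : Equiv.Perm ℕ, SeqEquivalent (y ∘ σ) y) :
    ∃ M : ℝ, 0 < M ∧ ∀ (σ : Equiv.Perm ℕ) (m : ℕ) (a : ℕ → ℝ),
      ‖∑ k ∈ Finset.range m, a k • y (σ k)‖ ≤ M * ‖∑ k ∈ Finset.range m, a k • y k‖ := by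
  classical
  by_contra hcon
  have hunb : ∀ M : ℝ, ∃ (σ : Equiv.Perm ℕ) (m : ℕ) (a : ℕ → ℝ),
      M * ‖∑ k ∈ Finset.range m, a k • y k‖ < ‖∑ k ∈ Finset.range m, a k • y (σ k)‖ := by
    intro M
    by_contra hM
    push Not at hM
    refine hcon ⟨max M 1, by positivity, fun σ m a => (hM σ m a).trans ?_⟩
    gcongr
    exact le_max_left _ _
  choose Nx τ c hlt hτ1 hτ2 hc0 hsrc htgt using hump_step y hy K hK0 hK hunb
  let P : ℕ → ℕ := fun j => Nx^[j] 0
  have hPs : ∀ j, P (j + 1) = Nx (P j) := fun j => Function.iterate_succ_apply' _ _ _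
  have hPm : StrictMono P := strictMono_nat_of_lt_succ fun j => by rw [hPs]; exact hlt _
  let blk : ℕ → ℕ := fun k => Nat.findGreatest (fun j => P j ≤ k) k
  have hblk1 : ∀ k, P (blk k) ≤ k := fun k =>
    Nat.findGreatest_spec (P := fun j => P j ≤ k) (Nat.zero_le k) (by simp [P])
  have hblk2 : ∀ k, k < P (blk k + 1) := by
    intro k
    by_contra h
    push Not at h
    have h1 : blk k + 1 ≤ k := (hPm.id_le _).trans h
    have := Nat.le_findGreatest (P := fun j => P j ≤ k) h1 h
    change blk k + 1 ≤ blk k at this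
    omega
  have hblk : ∀ j k, P j ≤ k → k < P (j + 1) → blk k = j := by
    intro j k h1 h2
    have h3 : P j < P (blk k + 1) := lt_of_le_of_lt h1 (hblk2 k)
    have h4 : P (blk k) < P (j + 1) := lt_of_le_of_lt (hblk1 k) h2
    rw [hPm.lt_iff_lt] at h3 h4
    omega
  have hb1 : ∀ k, blk (τ (P (blk k)) k) = blk k := by
    intro k
    have h2 := hblk2 k
    rw [hPs] at h2
    have := hτ1 (P (blk k)) k (hblk1 k) h2
    exact hblk _ _ this.1 (by rw [hPs]; exact this.2)
  have hb2 : ∀ k, blk ((τ (P (blk k))).symm k) = blk k := by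
    intro k
    have h2 := hblk2 k
    rw [hPs] at h2
    have := hτ2 (P (blk k)) k (hblk1 k) h2
    exact hblk _ _ this.1 (by rw [hPs]; exact this.2)
  let σ : Equiv.Perm ℕ :=
    { toFun := fun k => τ (P (blk k)) k
      invFun := fun k => (τ (P (blk k))).symm k
      left_inv := fun k => by
        change (τ (P (blk (τ (P (blk k)) k)))).symm (τ (P (blk k)) k) = k
        rw [hb1, Equiv.symm_apply_apply]
      right_inv := fun k => by
        change τ (P (blk ((τ (P (blk k))).symm k))) ((τ (P (blk k))).symm k) = k
        rw [hb2, Equiv.apply_symm_apply] }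
  let a : ℕ → ℝ := fun k => c (P (blk k)) k
  have haI : ∀ j n, n ≤ P (j + 1) → ∀ k ∈ Finset.Ico (P j) n, a k = c (P j) k ∧
      σ k = τ (P j) k := by
    intro j n hn k hk
    rw [Finset.mem_Ico] at hk
    have : blk k = j := hblk j k hk.1 (hk.2.trans_le hn)
    constructor
    · change c (P (blk k)) k = _
      rw [this]
    · change τ (P (blk k)) k = _
      rw [this]
  let B : ℕ → Y := fun j => ∑ k ∈ Finset.Ico (P j) (P (j + 1)), a k • y k
  have hBn : ∀ j, ‖B j‖ ≤ (1 / 2) ^ j := by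
    intro j
    have : B j = ∑ k ∈ Finset.Ico (P j) (Nx (P j)), c (P j) k • y k := by
      rw [← hPs]
      refine Finset.sum_congr rfl fun k hk => ?_
      rw [(haI j _ le_rfl k hk).1]
    rw [this]
    refine (hsrc (P j)).trans ?_
    exact pow_le_pow_of_le_one (by norm_num) (by norm_num) (hPm.id_le j)
  have hBsum : Summable B := Summable.of_norm_bounded
    (summable_geometric_of_lt_one (by norm_num) (by norm_num : (1 / 2 : ℝ) < 1)) hBn
  have hT := hBsum.hasSum.tendsto_sum_nat
  have hSP : ∀ j, ∑ k ∈ Finset.range (P j), a k • y k = ∑ i ∈ Finset.range j, B i := by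
    intro j
    induction j with
    | zero => simp [P]
    | succ j ih =>
      rw [Finset.sum_range_succ, ← ih, Finset.sum_range_add_sum_Ico _ (hPm.monotone (Nat.le_succ j))]
  have hpart : ∀ j n, P j ≤ n → n ≤ P (j + 1) →
      ‖∑ k ∈ Finset.Ico (P j) n, a k • y k‖ ≤ K * (1 / 2) ^ j := by
    intro j n h1 h2
    have hz : ∀ n, P j ≤ n → n ≤ P (j + 1) →
        ∑ k ∈ Finset.Ico (P j) n, a k • y k = ∑ k ∈ Finset.range n, c (P j) k • y k := by
      intro n h1 h2
      rw [← Finset.sum_range_add_sum_Ico _ h1, Finset.sum_eq_zero (s := Finset.range (P j)), zero_add]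
      · refine Finset.sum_congr rfl fun k hk => ?_
        rw [(haI j _ h2 k hk).1]
      · intro k hk
        rw [hc0 _ _ (Finset.mem_range.1 hk), zero_smul]
    rw [hz n h1 h2]
    refine (hK _ n (P (j + 1)) h2).trans ?_
    rw [← hz _ (hPm.monotone (Nat.le_succ j)) le_rfl]
    gcongr
    exact hBn j
  have hblkT : Tendsto blk atTop atTop := by
    refine tendsto_atTop.2 fun b => ?_
    filter_upwards [eventually_ge_atTop (P b)] with k hk
    have : P b < P (blk k + 1) := lt_of_le_of_lt hk (hblk2 k)
    rw [hPm.lt_iff_lt] at this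
    omega
  have hconv : Tendsto (fun n => ∑ k ∈ Finset.range n, a k • y k) atTop (𝓝 (∑' j, B j)) := by
    have h1 : Tendsto (fun n => ∑ i ∈ Finset.range (blk n), B i) atTop (𝓝 (∑' j, B j)) :=
      hT.comp hblkT
    have h2 : Tendsto (fun n => ∑ k ∈ Finset.Ico (P (blk n)) n, a k • y k) atTop (𝓝 0) := by
      refine squeeze_zero_norm (fun n => hpart (blk n) n (hblk1 n) (hblk2 n).le) ?_
      have h3 : Tendsto (fun n : ℕ => K * (1 / 2 : ℝ) ^ n) atTop (𝓝 (K * 0)) :=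
        (tendsto_pow_atTop_nhds_zero_of_lt_one (by norm_num) (by norm_num)).const_mul K
      rw [mul_zero] at h3
      exact h3.comp hblkT
    have h3 := h1.add h2
    rw [add_zero] at h3
    refine h3.congr fun n => ?_
    rw [← hSP, Finset.sum_range_add_sum_Ico _ (hblk1 n)]
  obtain ⟨x, hx⟩ := (hs σ a).2 ⟨_, hconv⟩
  have h1 := hx.comp hPm.tendsto_atTop
  have h2 := h1.comp (tendsto_add_atTop_nat 1)
  have h3 := (h2.sub h1).norm
  rw [sub_self, norm_zero] at h3
  have h4 : ∀ j, (1 : ℝ) ≤ ‖((fun n => ∑ k ∈ Finset.range n, a k • (y ∘ σ) k) ∘ P) (j + 1) -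
      ((fun n => ∑ k ∈ Finset.range n, a k • (y ∘ σ) k) ∘ P) j‖ := by
    intro j
    simp only [Function.comp]
    rw [← Finset.sum_range_add_sum_Ico _ (hPm.monotone (Nat.le_succ j)), add_sub_cancel_left]
    have : ∑ k ∈ Finset.Ico (P j) (P (j + 1)), a k • y (σ k) =
        ∑ k ∈ Finset.Ico (P j) (Nx (P j)), c (P j) k • y (τ (P j) k) := by
      rw [← hPs]
      refine Finset.sum_congr rfl fun k hk => ?_
      rw [(haI j _ le_rfl k hk).1, (haI j _ le_rfl k hk).2]
    have h5 := htgt (P j)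
    rw [← this] at h5
    exact h5
  have := ge_of_tendsto' h3 h4
  linarith

lemma perm_helper (m : ℕ) (C B : Finset ℕ) (hC : C ⊆ Finset.range m) (hB : B ⊆ Finset.range m)
    (hcard : C.card = B.card) :
    ∃ π : Equiv.Perm ℕ, C.image π = B ∧ (Finset.range m).image π = Finset.range m := by
  classical
  let e := Finset.equivOfCardEq hcard
  let f : ℕ → ℕ := fun i => if h : i ∈ C then (e ⟨i, h⟩ : ℕ) else 0
  have hf : ∀ i (h : i ∈ C), f i = e ⟨i, h⟩ := fun i h => by simp [f, h]
  obtain ⟨g, hg⟩ := Finset.exists_equiv_extend_of_card_eq (α := ↥(Finset.range m))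
    (t := Finset.range m) (by simp) (s := C.subtype (· ∈ Finset.range m))
    (f := fun k => f k)
    (by
      intro k hk
      simp only [Finset.mem_image, Finset.mem_subtype] at hk
      obtain ⟨i, hi, rfl⟩ := hk
      rw [hf i hi]
      exact hB (e _).2)
    (by
      intro i hi j hj hij
      simp only [Finset.mem_coe, Finset.mem_subtype] at hi hj
      simp only [hf _ hi, hf _ hj] at hij
      have := e.injective (Subtype.ext hij)
      exact Subtype.ext (by simpa using this))
  let τ : Equiv.Perm ℕ := Equiv.Perm.ofSubtype (p := (· ∈ Finset.range m)) g
  have hτ : ∀ k (hk : k ∈ Finset.range m), τ k = g ⟨k, hk⟩ := fun k hk =>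
    Equiv.Perm.ofSubtype_apply_of_mem g hk
  refine ⟨τ, ?_, ?_⟩
  · refine Finset.eq_of_subset_of_card_le ?_ ?_
    · intro k hk
      rw [Finset.mem_image] at hk
      obtain ⟨i, hi, rfl⟩ := hk
      rw [hτ i (hC hi), hg ⟨i, hC hi⟩ (by simpa using hi), hf i hi]
      exact (e _).2
    · rw [Finset.card_image_of_injective _ τ.injective, hcard]
  · refine Finset.eq_of_subset_of_card_le ?_ ?_
    · intro k hk
      rw [Finset.mem_image] at hk
      obtain ⟨i, hi, rfl⟩ := hk
      rw [hτ i hi]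
      exact (g _).2
    · rw [Finset.card_image_of_injective _ τ.injective]

/-- The smallness condition on signed sums. -/
def SmallSums {Y : Type} [NormedAddCommGroup Y] [NormedSpace ℝ Y] (y : ℕ → Y) : Prop :=
  ∀ ε : ℝ, 0 < ε → ∃ n : ℕ, 0 < n ∧ ∀ (A : Finset ℕ) (s : ℕ → SignType), A.card ≤ n →
    ‖∑ i ∈ A, ((s i : SignType) : ℝ) • y i‖ ≤ ε * n

lemma smallSums_of_symm {Y : Type} [NormedAddCommGroup Y] [NormedSpace ℝ Y]
    (y : ℕ → Y) (K : ℝ) (hK0 : 0 < K)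
    (hK : ∀ (a : ℕ → ℝ) (n m : ℕ), n ≤ m →
      ‖∑ k ∈ Finset.range n, a k • y k‖ ≤ K * ‖∑ k ∈ Finset.range m, a k • y k‖)
    (M : ℝ) (hM0 : 0 < M) (hM : ∀ (σ : Equiv.Perm ℕ) (m : ℕ) (a : ℕ → ℝ),
      ‖∑ k ∈ Finset.range m, a k • y (σ k)‖ ≤ M * ‖∑ k ∈ Finset.range m, a k • y k‖)
    (hne : ¬ EquivL1UnitBasis y) : SmallSums y := by
  classical
  -- subset projections
  have hsub : ∀ (a : ℕ → ℝ) (m : ℕ) (B : Finset ℕ), B ⊆ Finset.range m →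
      ‖∑ k ∈ B, a k • y k‖ ≤ M * (K * M) * ‖∑ k ∈ Finset.range m, a k • y k‖ := by
    intro a m B hB
    have hcm : B.card ≤ m := by simpa using Finset.card_le_card hB
    obtain ⟨π, h1, h2⟩ := perm_helper m (Finset.range B.card) B (Finset.range_mono hcm) hB
      (by simp)
    have e1 : ∑ k ∈ B, a k • y k = ∑ i ∈ Finset.range B.card, a (π i) • y (π i) := by
      conv_lhs => rw [← h1]
      exact Finset.sum_image (fun i _ j _ h => π.injective h)
    have e2 : ∑ i ∈ Finset.range m, a (π i) • y i = ∑ k ∈ Finset.range m, a k • y (π.symm k) := by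
      conv_rhs => rw [← h2]
      rw [Finset.sum_image (fun i _ j _ h => π.injective h)]
      simp
    calc ‖∑ k ∈ B, a k • y k‖ = ‖∑ i ∈ Finset.range B.card, a (π i) • y (π i)‖ := by rw [e1]
      _ ≤ M * ‖∑ i ∈ Finset.range B.card, a (π i) • y i‖ := hM π _ (fun i => a (π i))
      _ ≤ M * (K * ‖∑ i ∈ Finset.range m, a (π i) • y i‖) := by
          gcongr
          exact hK (fun i => a (π i)) _ _ hcm
      _ ≤ M * (K * (M * ‖∑ i ∈ Finset.range m, a i • y i‖)) := by
          gcongr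
          rw [e2]
          exact hM π.symm m a
      _ = _ := by ring
  -- absolute values
  have habs : ∀ (a : ℕ → ℝ) (m : ℕ), ‖∑ k ∈ Finset.range m, |a k| • y k‖ ≤
      2 * (M * (K * M)) * ‖∑ k ∈ Finset.range m, a k • y k‖ := by
    intro a m
    rw [← Finset.sum_filter_add_sum_filter_not _ (fun k => 0 ≤ a k)]
    have e1 : ∑ k ∈ Finset.range m with 0 ≤ a k, |a k| • y k =
        ∑ k ∈ Finset.range m with 0 ≤ a k, a k • y k :=
      Finset.sum_congr rfl fun k hk => by rw [abs_of_nonneg (Finset.mem_filter.1 hk).2]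
    have e2 : ∑ k ∈ Finset.range m with ¬ 0 ≤ a k, |a k| • y k =
        - ∑ k ∈ Finset.range m with ¬ 0 ≤ a k, a k • y k := by
      rw [← Finset.sum_neg_distrib]
      exact Finset.sum_congr rfl fun k hk => by
        rw [abs_of_neg (not_le.1 (Finset.mem_filter.1 hk).2), neg_smul]
    rw [e1, e2]
    refine (norm_add_le _ _).trans ?_
    rw [norm_neg]
    have h1 := hsub a m _ (Finset.filter_subset (fun k => 0 ≤ a k) _)
    have h2 := hsub a m _ (Finset.filter_subset (fun k => ¬ 0 ≤ a k) _)
    linarith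
  -- averaging
  have havg : ∀ (b : ℕ → ℝ) (m : ℕ),
      ‖(∑ k ∈ Finset.range m, b k) • ∑ k ∈ Finset.range m, y k‖ ≤
      m * (M * ‖∑ k ∈ Finset.range m, b k • y k‖) := by
    intro b m
    rcases Nat.eq_zero_or_pos m with rfl | hm
    · simp
    have : NeZero m := ⟨hm.ne'⟩
    have e1 : (∑ k ∈ Finset.range m, b k) • ∑ k ∈ Finset.range m, y k =
        ∑ t : Fin m, ∑ k : Fin m, b k • y ((k + t : Fin m) : ℕ) := by
      rw [Finset.sum_comm, Finset.sum_range, Finset.sum_range, Finset.sum_smul]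
      refine Finset.sum_congr rfl fun k _ => ?_
      rw [← Finset.smul_sum]
      congr 1
      exact (Equiv.sum_comp (Equiv.addLeft k) (fun i : Fin m => y i)).symm
    rw [e1]
    have e2 : ∀ t : Fin m, ‖∑ k : Fin m, b k • y ((k + t : Fin m) : ℕ)‖ ≤
        M * ‖∑ k ∈ Finset.range m, b k • y k‖ := by
      intro t
      let π : Equiv.Perm ℕ := Equiv.Perm.extendDomain (Equiv.addRight t) Fin.equivSubtype
      have hπ : ∀ k : Fin m, π k = (k + t : Fin m) := fun k =>
        Equiv.Perm.extendDomain_apply_image (Equiv.addRight t) Fin.equivSubtype k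
      have := hM π m b
      rw [Finset.sum_range] at this
      simpa only [hπ] using this
    calc _ ≤ ∑ t : Fin m, M * ‖∑ k ∈ Finset.range m, b k • y k‖ :=
          norm_sum_le_of_le _ fun t _ => e2 t
      _ = _ := by simp
  have hA : ∀ (A : Finset ℕ) (n : ℕ), A.card ≤ n →
      ‖∑ i ∈ A, y i‖ ≤ M * (K * ‖∑ k ∈ Finset.range n, y k‖) := by
    intro A n hn
    obtain ⟨m₀, hm₀⟩ := A.exists_nat_subset_range
    obtain ⟨π, h1, -⟩ := perm_helper (max m₀ A.card) (Finset.range A.card) A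
      (Finset.range_mono (le_max_right _ _)) (hm₀.trans (Finset.range_mono (le_max_left _ _)))
      (by simp)
    have e1 : ∑ k ∈ A, y k = ∑ i ∈ Finset.range A.card, y (π i) := by
      conv_lhs => rw [← h1]
      exact Finset.sum_image (fun i _ j _ h => π.injective h)
    have h2 := hM π A.card (fun _ => 1)
    have h3 := hK (fun _ => 1) A.card n hn
    simp only [one_smul] at h2 h3
    rw [e1]
    refine h2.trans ?_
    gcongr
  intro ε hε
  have hne' : ∀ c : ℝ, 0 < c → ∃ (n : ℕ) (a : ℕ → ℝ),
      ‖∑ k ∈ Finset.range n, a k • y k‖ < c * ∑ k ∈ Finset.range n, |a k| := by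
    intro c hc
    by_contra h
    push Not at h
    exact hne ⟨c, hc, h⟩
  let L : ℝ := 2 * (M * (K * (M * (2 * (M * (K * M))))))
  have hL : 0 < L := by positivity
  obtain ⟨m, a, ha⟩ := hne' (ε / L) (by positivity)
  set s := ∑ k ∈ Finset.range m, |a k| with hs
  have hs0 : 0 < s := by
    have : 0 < ε / L * s := lt_of_le_of_lt (norm_nonneg _) ha
    exact (pos_iff_pos_of_mul_pos this).1 (by positivity)
  have hm : 0 < m := by
    rcases Nat.eq_zero_or_pos m with rfl | hm
    · simp [hs] at hs0
    · exact hm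
  refine ⟨m, hm, fun A sg hAm => ?_⟩
  have hφ : ‖∑ k ∈ Finset.range m, y k‖ ≤ m * (M * (2 * (M * (K * M)) * (ε / L))) := by
    have h1 := havg (fun k => |a k|) m
    simp only [← hs] at h1
    rw [norm_smul, Real.norm_of_nonneg hs0.le] at h1
    have h2 := habs a m
    have h3 : s * ‖∑ k ∈ Finset.range m, y k‖ ≤
        s * (m * (M * (2 * (M * (K * M)) * (ε / L)))) := by
      refine h1.trans ?_
      calc (m : ℝ) * (M * ‖∑ k ∈ Finset.range m, |a k| • y k‖)
          ≤ m * (M * (2 * (M * (K * M)) * (ε / L * s))) := by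
            gcongr
            refine h2.trans ?_
            gcongr
        _ = _ := by ring
    exact le_of_mul_le_mul_left h3 hs0
  have hdec : ∑ i ∈ A, ((sg i : SignType) : ℝ) • y i =
      ∑ i ∈ A with sg i = 1, y i - ∑ i ∈ A with sg i = -1, y i := by
    rw [Finset.sum_filter, Finset.sum_filter, ← Finset.sum_sub_distrib]
    refine Finset.sum_congr rfl fun i _ => ?_
    rcases hsi : sg i with _ | _ | _ <;> simp
  rw [hdec]
  have h1 := hA _ m ((Finset.card_filter_le A (fun i => sg i = 1)).trans hAm)
  have h2 := hA _ m ((Finset.card_filter_le A (fun i => sg i = -1)).trans hAm)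
  calc _ ≤ M * (K * ‖∑ k ∈ Finset.range m, y k‖) + M * (K * ‖∑ k ∈ Finset.range m, y k‖) :=
        (norm_sub_le _ _).trans (add_le_add h1 h2)
    _ = 2 * (M * (K * ‖∑ k ∈ Finset.range m, y k‖)) := by ring
    _ ≤ 2 * (M * (K * (m * (M * (2 * (M * (K * M)) * (ε / L)))))) := by gcongr
    _ = L * (ε / L) * m := by simp only [L]; ring
    _ = ε * m := by rw [mul_div_cancel₀ _ hL.ne']

lemma smallSums_of_upper {Y : Type} [NormedAddCommGroup Y] [NormedSpace ℝ Y]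
    (y : ℕ → Y) (p : ℝ) (hp : 1 < p) (h : HasUpperPEstimates p y) : SmallSums y := by
  classical
  obtain ⟨C, hC, h⟩ := h
  intro ε hε
  have hlim : Tendsto (fun n : ℕ => C * (n : ℝ) ^ (-(1 - 1 / p))) atTop (𝓝 (C * 0)) := by
    refine Tendsto.const_mul C ?_
    refine (tendsto_rpow_neg_atTop ?_).comp tendsto_natCast_atTop_atTop
    have : 1 / p < 1 := by rw [div_lt_one (by linarith)]; exact hp
    linarith
  rw [mul_zero] at hlim
  obtain ⟨n, hn, hn0⟩ := ((hlim.eventually (gt_mem_nhds hε)).and (eventually_gt_atTop 0)).exists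
  refine ⟨n, hn0, fun A s hA => ?_⟩
  obtain ⟨m, hm⟩ := A.exists_nat_subset_range
  have hp0 : 0 < p := by linarith
  have hnpos : (0 : ℝ) < n := by exact_mod_cast hn0
  have h1 := h m (fun k => if k ∈ A then ((s k : SignType) : ℝ) else 0)
  have e1 : ∑ k ∈ Finset.range m, (if k ∈ A then ((s k : SignType) : ℝ) else 0) • y k =
      ∑ i ∈ A, ((s i : SignType) : ℝ) • y i := by
    rw [← Finset.sum_subset hm]
    · exact Finset.sum_congr rfl fun k hk => by rw [if_pos hk]
    · intro k _ hk
      rw [if_neg hk, zero_smul]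
  have e2 : ∑ k ∈ Finset.range m, |if k ∈ A then ((s k : SignType) : ℝ) else 0| ^ p ≤ n := by
    rw [← Finset.sum_subset hm]
    · calc _ ≤ ∑ k ∈ A, (1 : ℝ) := by
            refine Finset.sum_le_sum fun k hk => ?_
            rw [if_pos hk]
            rcases s k with _ | _ | _ <;> simp [Real.zero_rpow hp0.ne']
        _ ≤ n := by simpa using hA
    · intro k _ hk
      rw [if_neg hk, abs_zero, Real.zero_rpow hp0.ne']
  rw [e1] at h1
  refine h1.trans ?_
  calc _ ≤ C * (n : ℝ) ^ (1 / p) := by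
        gcongr
    _ = C * (n : ℝ) ^ (-(1 - 1 / p)) * n := by
        rw [mul_assoc]
        congr 1
        nth_rw 3 [← Real.rpow_one (n : ℝ)]
        rw [← Real.rpow_add hnpos]
        congr 1
        ring
    _ ≤ ε * n := by gcongr

lemma abel_ineq (b x w : ℕ → ℝ) (m : ℕ) (hb : ∀ i j, i ≤ j → j < m → b j ≤ b i)
    (hb0 : ∀ i, 0 ≤ b i)
    (h : ∀ n ≤ m, ∑ k ∈ Finset.range n, x k ≤ ∑ k ∈ Finset.range n, w k) :
    ∑ k ∈ Finset.range m, x k * b k ≤ ∑ k ∈ Finset.range m, w k * b k := by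
  have key : ∀ n, n + 1 ≤ m → b n * (∑ k ∈ Finset.range (n + 1), (w k - x k)) ≤
      ∑ k ∈ Finset.range (n + 1), (w k - x k) * b k := by
    intro n
    induction n with
    | zero => intro _; simp [mul_comm]
    | succ n ih =>
      intro hn
      have h1 := ih (by omega)
      rw [Finset.sum_range_succ _ (n + 1), Finset.sum_range_succ _ (n + 1)]
      have h2 := h (n + 1) (by omega)
      have h3 : 0 ≤ ∑ k ∈ Finset.range (n + 1), (w k - x k) := by
        rw [Finset.sum_sub_distrib]; linarith
      have h4 := mul_le_mul_of_nonneg_right (hb n (n + 1) (by omega) (by omega)) h3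
      linarith
  rcases Nat.eq_zero_or_pos m with rfl | hm
  · simp
  obtain ⟨n, rfl⟩ : ∃ n, m = n + 1 := ⟨m - 1, by omega⟩
  have h1 := key n le_rfl
  have h2 := h (n + 1) le_rfl
  have h3 : 0 ≤ ∑ k ∈ Finset.range (n + 1), (w k - x k) := by
    rw [Finset.sum_sub_distrib]; linarith
  have h4 := mul_nonneg (hb0 n) h3
  have h5 : ∑ k ∈ Finset.range (n + 1), (w k - x k) * b k =
      ∑ k ∈ Finset.range (n + 1), w k * b k - ∑ k ∈ Finset.range (n + 1), x k * b k := by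
    rw [← Finset.sum_sub_distrib]
    exact Finset.sum_congr rfl fun k _ => by ring
  linarith

lemma exists_sorted (F : Finset ℕ) (b : ℕ → ℝ) : ∃ L : ℕ → ℕ,
    Set.InjOn L (Finset.range F.card) ∧ (Finset.range F.card).image L = F ∧
    ∀ i j, i ≤ j → j < F.card → b (L j) ≤ b (L i) := by
  classical
  let e₀ : Fin F.card ≃ F := F.equivFin.symm
  let f : Fin F.card → ℝ := fun i => - b (e₀ i)
  let σ := Tuple.sort f
  have hσ : Monotone (f ∘ σ) := Tuple.monotone_sort f
  let L : ℕ → ℕ := fun k => if h : k < F.card then (e₀ (σ ⟨k, h⟩) : ℕ) else 0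
  have hL : ∀ k (h : k < F.card), L k = e₀ (σ ⟨k, h⟩) := fun k h => by simp [L, h]
  have hinj : Set.InjOn L (Finset.range F.card) := by
    intro i hi j hj hij
    simp only [Finset.coe_range, Set.mem_Iio] at hi hj
    rw [hL i hi, hL j hj] at hij
    have := σ.injective (e₀.injective (Subtype.ext hij))
    simpa using this
  refine ⟨L, hinj, ?_, ?_⟩
  · refine Finset.eq_of_subset_of_card_le ?_ ?_
    · intro k hk
      rw [Finset.mem_image] at hk
      obtain ⟨i, hi, rfl⟩ := hk
      rw [hL i (Finset.mem_range.1 hi)]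
      exact (e₀ _).2
    · rw [Finset.card_image_of_injOn hinj, Finset.card_range]
  · intro i j hij hj
    have h1 := hσ (show (⟨i, by omega⟩ : Fin F.card) ≤ ⟨j, hj⟩ from hij)
    simp only [Function.comp, f] at h1
    rw [hL i (by omega), hL j hj]
    linarith

lemma exists_weights {Y : Type} [NormedAddCommGroup Y] [NormedSpace ℝ Y]
    (y : ℕ → Y) (hy : ∀ n, ‖y n‖ = 1) (hS : SmallSums y) :
    ∃ w : ℕ → ℝ, Antitone w ∧ (∀ k, 0 < w k) ∧
      Tendsto (fun n => ∑ k ∈ Finset.range n, w k) atTop atTop ∧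
      ∀ (F : Finset ℕ) (v : ℕ → ℝ) (D : ℝ), 0 ≤ D →
        (∀ A ⊆ F, ∑ i ∈ A, |v i| ≤ D * ∑ k ∈ Finset.range A.card, w k) →
        ‖∑ i ∈ F, v i • y i‖ ≤ 2 * D := by
  classical
  choose N hN0 hN using fun j : ℕ => hS ((1 / 2) ^ j) (by positivity)
  have hN2 : ∀ j, (2 : ℝ) ^ j ≤ N j := by
    intro j
    have := hN j {0} (fun _ => 1) (by rw [Finset.card_singleton]; exact hN0 j)
    simp only [Finset.sum_singleton, SignType.coe_one, one_smul, hy, one_div, inv_pow] at this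
    have h2 : (0 : ℝ) < 2 ^ j := by positivity
    rwa [inv_mul_eq_div, le_div_iff₀ h2, one_mul] at this
  have hNr : ∀ j, (0 : ℝ) < N j := fun j => by exact_mod_cast hN0 j
  let f : ℕ → ℕ → ℝ := fun k j => if k < N j then ((N j : ℝ))⁻¹ else 0
  have hf0 : ∀ k j, 0 ≤ f k j := fun k j => by
    simp only [f]; split_ifs
    · exact (inv_pos.2 (hNr j)).le
    · exact le_rfl
  have hgeo : Summable (fun j : ℕ => (1 / 2 : ℝ) ^ j) :=
    summable_geometric_of_lt_one (by norm_num) (by norm_num)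
  have hfle : ∀ k j, f k j ≤ (1 / 2) ^ j := by
    intro k j
    simp only [f]
    split_ifs
    · rw [one_div, inv_pow]
      exact inv_anti₀ (by positivity) (hN2 j)
    · positivity
  have hfs : ∀ k, Summable (f k) := fun k => Summable.of_nonneg_of_le (hf0 k) (hfle k) hgeo
  let w : ℕ → ℝ := fun k => ∑' j, f k j
  have hwpos : ∀ k, 0 < w k := by
    intro k
    refine (hfs k).tsum_pos (hf0 k) k ?_
    have : k < N k := by
      have h1 : (k : ℝ) < 2 ^ k := by exact_mod_cast k.lt_two_pow_self
      exact_mod_cast h1.trans_le (hN2 k)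
    simp only [f, this, if_true]
    exact inv_pos.2 (hNr k)
  refine ⟨w, ?_, hwpos, ?_, ?_⟩
  · intro i j hij
    refine (hfs j).tsum_le_tsum (fun l => ?_) (hfs i)
    simp only [f]
    split_ifs with h1 h2 h2
    · exact le_rfl
    · omega
    · exact (inv_pos.2 (hNr l)).le
    · exact le_rfl
  · refine tendsto_atTop.2 fun c => ?_
    obtain ⟨J, hJ⟩ := exists_nat_ge c
    filter_upwards [eventually_ge_atTop (∑ j ∈ Finset.range J, N j)] with n hn
    refine hJ.trans ?_
    have e1 : ∑ k ∈ Finset.range n, w k = ∑' j, ∑ k ∈ Finset.range n, f k j :=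
      (Summable.tsum_finsetSum fun k _ => hfs k).symm
    rw [e1]
    have e2 : (J : ℝ) = ∑ j ∈ Finset.range J, (1 : ℝ) := by simp
    rw [e2]
    refine le_trans (Finset.sum_le_sum fun j hj => ?_)
      ((summable_sum fun k _ => hfs k).sum_le_tsum (Finset.range J)
        (fun j _ => Finset.sum_nonneg fun k _ => hf0 k j))
    have hjn : N j ≤ n := (Finset.single_le_sum (f := N) (fun i _ => Nat.zero_le _) hj).trans hn
    calc (1 : ℝ) = ∑ k ∈ Finset.range (N j), f k j := by
          rw [Finset.sum_congr rfl (g := fun _ => ((N j : ℝ))⁻¹)]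
          · rw [Finset.sum_const, Finset.card_range, nsmul_eq_mul, mul_inv_cancel₀ (hNr j).ne']
          · intro k hk
            simp only [f, Finset.mem_range.1 hk, if_true]
      _ ≤ ∑ k ∈ Finset.range n, f k j :=
          Finset.sum_le_sum_of_subset_of_nonneg (Finset.range_mono hjn) fun k _ _ => hf0 k j
  · intro F v D hD hA
    obtain ⟨g, hg1, hg2⟩ := exists_dual_vector'' ℝ (∑ i ∈ F, v i • y i)
    have hg2' : g (∑ i ∈ F, v i • y i) = ‖∑ i ∈ F, v i • y i‖ := by simpa using hg2
    have hgA : ∀ j (A : Finset ℕ), A.card ≤ N j → ∑ i ∈ A, |g (y i)| ≤ (1 / 2) ^ j * N j := by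
      intro j A hAc
      have h1 := hN j A (fun i => SignType.sign (g (y i))) hAc
      have h2 : ∑ i ∈ A, |g (y i)| =
          g (∑ i ∈ A, ((SignType.sign (g (y i)) : SignType) : ℝ) • y i) := by
        rw [map_sum]
        refine Finset.sum_congr rfl fun i _ => ?_
        rw [map_smul, smul_eq_mul, sign_mul_self]
      rw [h2]
      refine (le_abs_self _).trans ?_
      rw [← Real.norm_eq_abs]
      refine (g.le_opNorm _).trans ?_
      calc _ ≤ 1 * ‖∑ i ∈ A, ((SignType.sign (g (y i)) : SignType) : ℝ) • y i‖ := by gcongr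
        _ ≤ _ := by rw [one_mul]; exact h1
    obtain ⟨L, hinj, himg, hanti⟩ := exists_sorted F (fun i => |g (y i)|)
    set m := F.card with hm
    have hLsum : ∀ h : ℕ → ℝ, ∀ n ≤ m, ∑ i ∈ (Finset.range n).image L, h i =
        ∑ k ∈ Finset.range n, h (L k) := by
      intro h n hn
      refine Finset.sum_image (hinj.mono ?_)
      exact_mod_cast Finset.range_mono hn
    have hLcard : ∀ n ≤ m, ((Finset.range n).image L).card = n := by
      intro n hn
      rw [Finset.card_image_of_injOn (hinj.mono (by exact_mod_cast Finset.range_mono hn)),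
        Finset.card_range]
    have h1 : ∑ k ∈ Finset.range m, |v (L k)| * |g (y (L k))| ≤
        ∑ k ∈ Finset.range m, (D * w k) * |g (y (L k))| := by
      refine abel_ineq (fun k => |g (y (L k))|) (fun k => |v (L k)|) (fun k => D * w k) m hanti
        (fun i => abs_nonneg _) fun n hn => ?_
      have h2 := hA ((Finset.range n).image L)
        (by rw [← himg]; exact Finset.image_subset_image (Finset.range_mono hn))
      rw [hLcard n hn, hLsum _ n hn, Finset.mul_sum] at h2
      exact h2
    have h2 : ∑ k ∈ Finset.range m, w k * |g (y (L k))| ≤ 2 := by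
      have e1 : ∑ k ∈ Finset.range m, w k * |g (y (L k))| =
          ∑' j, ∑ k ∈ Finset.range m, f k j * |g (y (L k))| := by
        rw [Summable.tsum_finsetSum fun k _ => (hfs k).mul_right _]
        exact Finset.sum_congr rfl fun k _ => (tsum_mul_right).symm
      rw [e1, ← tsum_geometric_two]
      refine Summable.tsum_le_tsum (fun j => ?_) (summable_sum fun k _ => (hfs k).mul_right _) hgeo
      have e2 : ∑ k ∈ Finset.range m, f k j * |g (y (L k))| =
          (N j : ℝ)⁻¹ * ∑ k ∈ Finset.range (min m (N j)), |g (y (L k))| := by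
        rw [Finset.mul_sum]
        symm
        rw [Finset.sum_congr rfl (g := fun k => f k j * |g (y (L k))|)]
        · refine Finset.sum_subset (Finset.range_mono (min_le_left _ _)) fun k hk hk' => ?_
          have : ¬ k < N j := by
            simp only [Finset.mem_range, lt_min_iff] at hk hk'
            tauto
          simp [f, this]
        · intro k hk
          have : k < N j := (Finset.mem_range.1 hk).trans_le (min_le_right _ _)
          simp [f, this]
      rw [e2, ← hLsum (fun i => |g (y i)|) _ (min_le_left _ _)]
      have h3 := hgA j ((Finset.range (min m (N j))).image L)
        (by rw [hLcard _ (min_le_left _ _)]; exact min_le_right _ _)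
      rw [inv_mul_le_iff₀ (hNr j), mul_comm]
      exact h3
    calc ‖∑ i ∈ F, v i • y i‖ = ∑ i ∈ F, v i * g (y i) := by
          rw [← hg2', map_sum]; simp
      _ ≤ ∑ i ∈ F, |v i| * |g (y i)| :=
          Finset.sum_le_sum fun i _ => by rw [← abs_mul]; exact le_abs_self _
      _ = ∑ k ∈ Finset.range m, |v (L k)| * |g (y (L k))| := by
          rw [← hLsum (fun i => |v i| * |g (y i)|) m le_rfl, himg]
      _ ≤ ∑ k ∈ Finset.range m, (D * w k) * |g (y (L k))| := h1
      _ = D * ∑ k ∈ Finset.range m, w k * |g (y (L k))| := by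
          rw [Finset.mul_sum]; exact Finset.sum_congr rfl fun k _ => by ring
      _ ≤ D * 2 := by gcongr
      _ = 2 * D := by ring

lemma na_tendsto_zero {Y : Type} [NormedAddCommGroup Y] [NormedSpace ℝ Y] (hY : LocallyAMUC Y)
    {X : Type} [NormedAddCommGroup X] [NormedSpace ℝ X] (e : ℕ → X)
    (hflat : ∀ x : X, ‖x‖ ≤ 1 → ∃ δ : ℝ, 0 < δ ∧ ∃ n : ℕ, ∀ k, n ≤ k →
      ‖x + δ • e k‖ ≤ 1 ∧ ‖x - δ • e k‖ ≤ 1)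
    (hweak : ∀ g : X →L[ℝ] ℝ, Tendsto (fun k => g (e k)) atTop (𝓝 0))
    (T : X →L[ℝ] Y) (hT : T ∈ NormAttainingOps X Y) :
    Tendsto (fun k => T (e k)) atTop (𝓝 0) := by
  obtain ⟨x, hx, hTx⟩ := hT
  rcases eq_or_ne T 0 with rfl | hT0
  · simp
  have hTn : 0 < ‖T‖ := norm_pos_iff.2 hT0
  obtain ⟨δ, hδ, n, hn⟩ := hflat x hx
  by_contra hcon
  rw [Metric.tendsto_atTop] at hcon
  push Not at hcon
  obtain ⟨η₀, hη₀, hfreq⟩ := hcon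
  set S : X →L[ℝ] Y := ‖T‖⁻¹ • T with hS
  have hSn : ‖S‖ = 1 := by
    rw [hS, norm_smul, norm_inv, norm_norm, inv_mul_cancel₀ hTn.ne']
  have hSx : ‖S x‖ = 1 := by
    rw [hS, smul_apply, norm_smul, norm_inv, norm_norm, hTx,
      inv_mul_cancel₀ hTn.ne']
  let η : ℝ := ‖T‖⁻¹ * η₀
  have hη : 0 < η := by positivity
  have hSle : ∀ z : X, ‖z‖ ≤ 1 → ‖S z‖ ≤ 1 := fun z hz => by
    have := S.le_opNorm z
    rw [hSn, one_mul] at this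
    exact this.trans hz
  have hd := hY (S x) hSx (δ * (η / 2)) (by positivity)
  rw [deltaTilde] at hd
  obtain ⟨r, hrmem, hr⟩ : ∃ r ∈ {r : ℝ | ∃ E : Submodule ℝ Y, IsClosed (E : Set Y) ∧
      FiniteDimensional ℝ (Y ⧸ E) ∧ r = sInf {m : ℝ | ∃ z : Y, z ∈ E ∧ ‖z‖ = 1 ∧
        m = max ‖S x + (δ * (η / 2)) • z‖ ‖S x - (δ * (η / 2)) • z‖} - 1}, 0 < r := by
    by_contra h
    push Not at h
    exact absurd (Real.sSup_nonpos h) (not_le.2 hd)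
  obtain ⟨E, hEc, hEf, rfl⟩ := hrmem
  set m₀ := sInf {m : ℝ | ∃ z : Y, z ∈ E ∧ ‖z‖ = 1 ∧
        m = max ‖S x + (δ * (η / 2)) • z‖ ‖S x - (δ * (η / 2)) • z‖} with hm₀
  have hlow : ∀ z ∈ E, ‖z‖ = 1 →
      m₀ ≤ max ‖S x + (δ * (η / 2)) • z‖ ‖S x - (δ * (η / 2)) • z‖ := by
    intro z hz hz1
    refine csInf_le ⟨0, ?_⟩ ⟨z, hz, hz1, rfl⟩
    rintro _ ⟨z, _, _, rfl⟩
    exact le_max_of_le_left (norm_nonneg _)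
  have : IsClosed (E : Set Y) := hEc
  let π : Y →L[ℝ] (Y ⧸ E) := E.mkQL
  have hπ : Tendsto (fun k => π (S (e k))) atTop (𝓝 0) := by
    let φ : (Y ⧸ E) ≃L[ℝ] (Fin (Module.finrank ℝ (Y ⧸ E)) → ℝ) :=
      (Module.finBasis ℝ (Y ⧸ E)).equivFunL
    have h1 : Tendsto (fun k => φ (π (S (e k)))) atTop (𝓝 0) := by
      rw [tendsto_pi_nhds]
      intro i
      exact hweak (((ContinuousLinearMap.proj (R := ℝ)
        (φ := fun _ : Fin (Module.finrank ℝ (Y ⧸ E)) => ℝ) i).comp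
        (φ : (Y ⧸ E) →L[ℝ] (Fin (Module.finrank ℝ (Y ⧸ E)) → ℝ))).comp (π.comp S))
    have h2 := (φ.symm.continuous.tendsto 0).comp h1
    rw [map_zero] at h2
    refine h2.congr fun k => ?_
    simp
  let ε : ℝ := min (η / 2) ((m₀ - 1) / (2 * δ))
  have hε : 0 < ε := lt_min (by positivity) (by positivity)
  obtain ⟨k₁, hk₁⟩ := Metric.tendsto_atTop.1 hπ (ε / 2) (by positivity)
  obtain ⟨k, hk, hkη⟩ := hfreq (max n k₁)
  have hvη : η ≤ ‖S (e k)‖ := by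
    rw [dist_zero_right] at hkη
    rw [hS, smul_apply, norm_smul, norm_inv, norm_norm]
    simp only [η]
    gcongr
  have h1 := hk₁ k ((le_max_right _ _).trans hk)
  rw [dist_zero_right] at h1
  obtain ⟨z', hz', hz'n⟩ := Submodule.Quotient.norm_mk_lt (π (S (e k))) (half_pos hε)
  have hz'n : ‖z'‖ < ε := by linarith
  let z := S (e k) - z'
  have hzE : z ∈ E := by
    have : (Submodule.Quotient.mk (S (e k)) : Y ⧸ E) = Submodule.Quotient.mk z' := hz'.symm
    exact (Submodule.Quotient.eq E).1 this
  have hzn : η / 2 ≤ ‖z‖ := by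
    have h2 := norm_sub_norm_le (S (e k)) z'
    have h3 : ε ≤ η / 2 := min_le_left _ _
    have h4 : ‖S (e k)‖ - ‖z'‖ ≤ ‖z‖ := h2
    linarith
  have hzpos : 0 < ‖z‖ := by linarith
  have hpm : ‖S x + δ • z‖ ≤ 1 + δ * ε ∧ ‖S x - δ • z‖ ≤ 1 + δ * ε := by
    obtain ⟨ha, hb⟩ := hn k ((le_max_left _ _).trans hk)
    have ha' := hSle _ ha
    have hb' := hSle _ hb
    rw [map_add, map_smul] at ha'
    rw [map_sub, map_smul] at hb'
    have hzz : ‖δ • z'‖ ≤ δ * ε := by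
      rw [norm_smul, Real.norm_of_nonneg hδ.le]
      gcongr
    constructor
    · have : S x + δ • z = (S x + δ • S (e k)) - δ • z' := by
        simp only [z, smul_sub]; abel
      rw [this]
      exact (norm_sub_le _ _).trans (add_le_add ha' hzz)
    · have : S x - δ • z = (S x - δ • S (e k)) + δ • z' := by
        simp only [z, smul_sub]; abel
      rw [this]
      exact (norm_add_le _ _).trans (add_le_add hb' hzz)
  -- convexity
  let s : ℝ := (η / 2) / ‖z‖
  have hs0 : 0 ≤ s := by positivity
  have hs1 : s ≤ 1 := (div_le_one hzpos).2 hzn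
  have hconv : ∀ u v : Y, ‖u + v‖ ≤ 1 + δ * ε → ‖u - v‖ ≤ 1 + δ * ε → ‖u + s • v‖ ≤ 1 + δ * ε := by
    intro u v hu hv
    have : u + s • v = ((1 + s) / 2) • (u + v) + ((1 - s) / 2) • (u - v) := by module
    rw [this]
    refine (norm_add_le _ _).trans ?_
    rw [norm_smul, norm_smul, Real.norm_of_nonneg (by linarith), Real.norm_of_nonneg (by linarith)]
    have h5 := mul_le_mul_of_nonneg_left hu (by linarith : 0 ≤ (1 + s) / 2)
    have h6 := mul_le_mul_of_nonneg_left hv (by linarith : 0 ≤ (1 - s) / 2)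
    linarith
  have hz1 : ‖‖z‖⁻¹ • z‖ = 1 := by
    rw [norm_smul, norm_inv, norm_norm, inv_mul_cancel₀ hzpos.ne']
  have hlow' := hlow (‖z‖⁻¹ • z) (E.smul_mem _ hzE) hz1
  have e1 : (δ * (η / 2)) • ‖z‖⁻¹ • z = s • (δ • z) := by
    rw [smul_smul, smul_smul]
    congr 1
    simp only [s]
    ring
  rw [e1] at hlow'
  have hA := hconv (S x) (δ • z) hpm.1 hpm.2
  have hB := hconv (S x) (-(δ • z)) (by rw [← sub_eq_add_neg]; exact hpm.2)
    (by rw [sub_neg_eq_add]; exact hpm.1)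
  rw [smul_neg, ← sub_eq_add_neg] at hB
  have hfin := hlow'.trans (max_le hA hB)
  have h7 : δ * ε ≤ (m₀ - 1) / 2 := by
    calc δ * ε ≤ δ * ((m₀ - 1) / (2 * δ)) := by
          gcongr
          exact min_le_right _ _
      _ = (m₀ - 1) / 2 := by field_simp
  linarith

lemma flat_comb (w : ℕ → ℝ) (hw0 : ∀ k, 0 < w k) (c : ℕ → ℝ)
    (hc0 : ∀ i, 0 ≤ c i) (hc : Tendsto c atTop (𝓝 0))
    (h1 : ∀ A : Finset ℕ, ∑ i ∈ A, c i ≤ ∑ k ∈ Finset.range A.card, w k)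
    (h2 : ∃ N : ℕ, ∀ A : Finset ℕ, N ≤ A.card →
      ∑ i ∈ A, c i ≤ (∑ k ∈ Finset.range A.card, w k) / 2) :
    ∃ δ : ℝ, 0 < δ ∧ ∃ n : ℕ, ∀ k, n ≤ k → ∀ A : Finset ℕ, k ∈ A →
      ∑ i ∈ A, c i + δ ≤ ∑ k ∈ Finset.range A.card, w k := by
  have hWmono : ∀ a b : ℕ, a ≤ b → ∑ k ∈ Finset.range a, w k ≤ ∑ k ∈ Finset.range b, w k :=
    fun a b hab => Finset.sum_le_sum_of_subset_of_nonneg (Finset.range_mono hab)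
      fun i _ _ => (hw0 i).le
  obtain ⟨P, δ₀, hδ₀, hP, hA⟩ : ∃ (P : Finset ℕ) (δ₀ : ℝ), 0 < δ₀ ∧ (∀ i ∈ P, 0 < c i) ∧
      ∀ A : Finset ℕ, P.card < A.card → ∑ i ∈ A, c i + δ₀ ≤ ∑ k ∈ Finset.range A.card, w k := by
    by_cases hfin : {i | 0 < c i}.Finite
    · refine ⟨hfin.toFinset, w hfin.toFinset.card, hw0 _, fun i hi => by simpa using hi, ?_⟩
      intro A hcard
      have e1 : ∑ i ∈ A, c i = ∑ i ∈ A ∩ hfin.toFinset, c i := by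
        symm
        refine Finset.sum_subset Finset.inter_subset_left fun i hi hni => ?_
        have : ¬ 0 < c i := fun h => hni (by simp [hi, h])
        exact le_antisymm (not_lt.1 this) (hc0 i)
      have e2 := h1 (A ∩ hfin.toFinset)
      have e3 := hWmono _ _ (Finset.card_le_card (Finset.inter_subset_right (s₁ := A)
        (s₂ := hfin.toFinset)))
      have e4 := hWmono _ _ (Nat.succ_le_of_lt hcard)
      rw [Nat.succ_eq_add_one, Finset.sum_range_succ] at e4
      linarith
    · obtain ⟨N, hN⟩ := h2
      obtain ⟨P, hPs, hPc⟩ := Set.Infinite.exists_subset_card_eq hfin N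
      refine ⟨P, w 0 / 2, by have := hw0 0; positivity, fun i hi => hPs hi, ?_⟩
      intro A hcard
      have e1 := hN A (by omega)
      have e2 := hWmono 1 A.card (by omega)
      simp only [Finset.sum_range_one] at e2
      linarith
  obtain ⟨μ, hμ, hμP⟩ : ∃ μ : ℝ, 0 < μ ∧ ∀ i ∈ P, μ ≤ c i := by
    rcases P.eq_empty_or_nonempty with rfl | hne
    · exact ⟨1, one_pos, by simp⟩
    · obtain ⟨j, hj, hjm⟩ := P.exists_min_image c hne
      exact ⟨c j, hP j hj, hjm⟩
  obtain ⟨n, hn⟩ := Metric.tendsto_atTop.1 hc (μ / 2) (by positivity)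
  refine ⟨min δ₀ (μ / 2), lt_min hδ₀ (by positivity), n, fun k hk A hkA => ?_⟩
  have hck : c k < μ / 2 := by
    have := hn k hk
    rw [Real.dist_eq, sub_zero] at this
    exact (le_abs_self _).trans_lt this
  rcases lt_or_ge P.card A.card with hcard | hcard
  · have := hA A hcard
    have := min_le_left δ₀ (μ / 2)
    linarith
  · have hkP : k ∉ P := fun h => by
      have := hμP k h
      linarith
    have hex : ∃ i ∈ P, i ∉ A := by
      by_contra hcon
      push Not at hcon
      have : P ⊆ A.erase k := fun i hi =>
        Finset.mem_erase.2 ⟨fun h => hkP (h ▸ hi), hcon i hi⟩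
      have h3 := Finset.card_le_card this
      have h4 := Finset.card_erase_lt_of_mem hkA
      omega
    obtain ⟨i, hiP, hiA⟩ := hex
    have hi' : i ∉ A.erase k := fun h => hiA (Finset.mem_of_mem_erase h)
    have h5 := h1 (insert i (A.erase k))
    rw [Finset.card_insert_of_notMem hi', Finset.card_erase_add_one hkA,
      Finset.sum_insert hi'] at h5
    have h6 := Finset.add_sum_erase A c hkA
    have h7 := hμP i hiP
    have := min_le_right δ₀ (μ / 2)
    linarith

/-- Index set: finite sets with signs. -/
abbrev PredIdx : Type := Finset ℕ × (ℕ → SignType)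

/-- Coordinates of the unit vectors. -/
noncomputable def eFun (w : ℕ → ℝ) (k : ℕ) : PredIdx → ℝ := fun i =>
  if k ∈ i.1 then (i.2 k : ℝ) / ∑ j ∈ Finset.range i.1.card, w j else 0

lemma abs_signType_le (s : SignType) : |(s : ℝ)| ≤ 1 := by
  cases s <;> simp

lemma eFun_abs_le (w : ℕ → ℝ) (hw0 : ∀ k, 0 < w k) (k : ℕ) (i : PredIdx) :
    |eFun w k i| ≤ 1 / ∑ j ∈ Finset.range i.1.card, w j := by
  have : 0 ≤ ∑ j ∈ Finset.range i.1.card, w j := Finset.sum_nonneg fun i _ => (hw0 i).le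
  unfold eFun
  split_ifs
  · rw [abs_div, abs_of_nonneg this]
    gcongr
    exact abs_signType_le _
  · rw [abs_zero]; positivity

lemma eFun_abs_le' (w : ℕ → ℝ) (hw0 : ∀ k, 0 < w k) (k : ℕ) (i : PredIdx) :
    |eFun w k i| ≤ 1 / w 0 := by
  by_cases h : k ∈ i.1
  · refine (eFun_abs_le w hw0 k i).trans ?_
    have h1 : 1 ≤ i.1.card := Finset.card_pos.2 ⟨k, h⟩
    have : w 0 ≤ ∑ j ∈ Finset.range i.1.card, w j :=
      Finset.single_le_sum (f := w) (fun i _ => (hw0 i).le) (Finset.mem_range.2 h1)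
    exact one_div_le_one_div_of_le (hw0 0) this
  · have := hw0 0
    simp only [eFun, h, if_false, abs_zero]
    positivity

lemma eFun_mem (w : ℕ → ℝ) (hw0 : ∀ k, 0 < w k) (k : ℕ) :
    Memℓp (E := fun _ : PredIdx => ℝ) (eFun w k) ⊤ := by
  refine memℓp_infty ⟨1 / w 0, ?_⟩
  rintro _ ⟨i, rfl⟩
  exact eFun_abs_le' w hw0 k i

/-- The ambient space. -/
abbrev Amb : Type := lp (fun _ : PredIdx => ℝ) ⊤

/-- The unit vectors in the ambient space. -/
noncomputable def eVec (w : ℕ → ℝ) (hw0 : ∀ k, 0 < w k) (k : ℕ) : Amb :=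
  ⟨eFun w k, eFun_mem w hw0 k⟩

/-- The space carrying the operator. -/
noncomputable abbrev XS (w : ℕ → ℝ) (hw0 : ∀ k, 0 < w k) : Submodule ℝ Amb :=
  (Submodule.span ℝ (Set.range (eVec w hw0))).topologicalClosure

lemma amb_abs_le (f : Amb) (i : PredIdx) : |f i| ≤ ‖f‖ :=
  lp.norm_apply_le_norm ENNReal.top_ne_zero f i

lemma eVec_norm_le (w : ℕ → ℝ) (hw0 : ∀ k, 0 < w k) (k : ℕ) : ‖eVec w hw0 k‖ ≤ 1 / w 0 := by
  have := hw0 0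
  exact lp.norm_le_of_forall_le (by positivity) (eFun_abs_le' w hw0 k)

lemma xs_approx (w : ℕ → ℝ) (hw0 : ∀ k, 0 < w k) (f : Amb) (hf : f ∈ XS w hw0) (ε : ℝ)
    (hε : 0 < ε) : ∃ g ∈ Submodule.span ℝ (Set.range (eVec w hw0)), ∀ i, |f i - g i| < ε := by
  have hf' : f ∈ closure ((Submodule.span ℝ (Set.range (eVec w hw0)) : Submodule ℝ Amb) :
    Set Amb) := hf
  obtain ⟨g, hg, hd⟩ := Metric.mem_closure_iff.1 hf' ε hε
  refine ⟨g, hg, fun i => ?_⟩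
  rw [dist_eq_norm] at hd
  exact (amb_abs_le (f - g) i).trans_lt hd

lemma xs_tendsto (w : ℕ → ℝ) (hw0 : ∀ k, 0 < w k) (l : Filter PredIdx)
    (hl : ∀ k, Tendsto (eFun w k) l (𝓝 0)) (f : Amb) (hf : f ∈ XS w hw0) :
    Tendsto (fun i => f i) l (𝓝 0) := by
  have hspan : ∀ g ∈ Submodule.span ℝ (Set.range (eVec w hw0)),
      Tendsto (fun i => g i) l (𝓝 0) := by
    intro g hg
    induction hg using Submodule.span_induction with
    | mem x hx =>
      obtain ⟨k, rfl⟩ := hx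
      exact hl k
    | zero => exact tendsto_const_nhds
    | add x y _ _ hx hy => simpa using hx.add hy
    | smul a x _ hx => simpa using hx.const_mul a
  rw [Metric.tendsto_nhds]
  intro ε hε
  obtain ⟨g, hg, hfg⟩ := xs_approx w hw0 f hf (ε / 2) (by positivity)
  filter_upwards [Metric.tendsto_nhds.1 (hspan g hg) (ε / 2) (by positivity)] with i hi
  rw [Real.dist_eq, sub_zero] at hi ⊢
  have h1 := abs_add_le (f i - g i) (g i)
  rw [sub_add_cancel] at h1
  have := hfg i
  linarith

/-- Coordinate functionals. -/
noncomputable def coordF (w : ℕ → ℝ) (f : Amb) (i : ℕ) : ℝ := w 0 * f ({i}, fun _ => 1)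

lemma xs_formula (w : ℕ → ℝ) (hw0 : ∀ k, 0 < w k) (f : Amb) (hf : f ∈ XS w hw0)
    (A : Finset ℕ) (s : ℕ → SignType) :
    f (A, s) * ∑ k ∈ Finset.range A.card, w k = ∑ i ∈ A, (s i : ℝ) * coordF w f i := by
  have hspan : ∀ g ∈ Submodule.span ℝ (Set.range (eVec w hw0)),
      g (A, s) * ∑ k ∈ Finset.range A.card, w k = ∑ i ∈ A, (s i : ℝ) * coordF w g i := by
    intro g hg
    induction hg using Submodule.span_induction with
    | mem x hx =>
      obtain ⟨k, rfl⟩ := hx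
      have hw := (hw0 0).ne'
      have e1 : ∀ i, coordF w (eVec w hw0 k) i = if k = i then 1 else 0 := by
        intro i
        simp only [coordF, eVec, eFun, Finset.mem_singleton, Finset.card_singleton,
          Finset.sum_range_one]
        split_ifs
        · simp [hw]
        · simp
      simp only [e1, mul_ite, mul_one, mul_zero, Finset.sum_ite_eq]
      simp only [eVec, eFun]
      split_ifs with h
      · have : 0 < ∑ k ∈ Finset.range A.card, w k :=
          Finset.sum_pos (fun i _ => hw0 i) (Finset.nonempty_range_iff.2
            (Finset.card_pos.2 ⟨k, h⟩).ne')
        field_simp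
      · simp
    | zero => simp [coordF]
    | add x y _ _ hx hy =>
      simp only [coordF, lp.coeFn_add, Pi.add_apply, add_mul, mul_add, hx, hy,
        Finset.sum_add_distrib]
    | smul a x _ hx =>
      simp only [coordF, lp.coeFn_smul, Pi.smul_apply, smul_eq_mul]
      rw [mul_assoc, hx, Finset.mul_sum]
      refine Finset.sum_congr rfl fun i _ => ?_
      simp only [coordF]; ring
  have hcl : IsClosed {g : Amb | g (A, s) * ∑ k ∈ Finset.range A.card, w k =
      ∑ i ∈ A, (s i : ℝ) * coordF w g i} := by
    have hev : ∀ i : PredIdx, Continuous fun g : Amb => g i := by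
      intro i
      refine LipschitzWith.continuous (K := 1) (LipschitzWith.of_dist_le_mul fun f g => ?_)
      rw [NNReal.coe_one, one_mul, dist_eq_norm, dist_eq_norm]
      exact amb_abs_le (f - g) i
    refine isClosed_eq ((hev _).mul continuous_const) ?_
    unfold coordF
    exact continuous_finsetSum _ fun i _ => continuous_const.mul (continuous_const.mul (hev _))
  exact closure_minimal (fun g hg => hspan g hg) hcl hf

lemma xs_abs (w : ℕ → ℝ) (hw0 : ∀ k, 0 < w k) (f : Amb) (hf : f ∈ XS w hw0) (A : Finset ℕ) :
    ∑ i ∈ A, |coordF w f i| =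
      f (A, fun i => SignType.sign (coordF w f i)) * ∑ k ∈ Finset.range A.card, w k := by
  rw [xs_formula w hw0 f hf]
  refine Finset.sum_congr rfl fun i _ => ?_
  exact (sign_mul_self _).symm

lemma xs_abs_le (w : ℕ → ℝ) (hw0 : ∀ k, 0 < w k) (f : Amb) (hf : f ∈ XS w hw0) (A : Finset ℕ) :
    ∑ i ∈ A, |coordF w f i| ≤ ‖f‖ * ∑ k ∈ Finset.range A.card, w k := by
  rw [xs_abs w hw0 f hf]
  have : 0 ≤ ∑ k ∈ Finset.range A.card, w k := Finset.sum_nonneg fun i _ => (hw0 i).le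
  gcongr
  exact (le_abs_self _).trans (amb_abs_le _ _)

lemma xs_norm_le (w : ℕ → ℝ) (hw0 : ∀ k, 0 < w k) (f : Amb) (hf : f ∈ XS w hw0) (D : ℝ)
    (hD : 0 ≤ D)
    (h : ∀ A : Finset ℕ, ∑ i ∈ A, |coordF w f i| ≤ D * ∑ k ∈ Finset.range A.card, w k) :
    ‖f‖ ≤ D := by
  refine lp.norm_le_of_forall_le hD fun ⟨A, s⟩ => ?_
  rcases A.eq_empty_or_nonempty with rfl | hne
  · have h0 : ∀ g ∈ Submodule.span ℝ (Set.range (eVec w hw0)), g (∅, s) = 0 := by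
      intro g hg
      induction hg using Submodule.span_induction with
      | mem x hx =>
        obtain ⟨k, rfl⟩ := hx
        simp [eVec, eFun]
      | zero => rfl
      | add x y _ _ hx hy => simp [hx, hy]
      | smul a x _ hx => simp [hx]
    refine le_of_forall_pos_le_add fun ε hε => ?_
    obtain ⟨g, hg, hfg⟩ := xs_approx w hw0 f hf ε hε
    have := hfg (∅, s)
    rw [h0 g hg, sub_zero] at this
    rw [Real.norm_eq_abs]
    linarith
  · have hpos : 0 < ∑ k ∈ Finset.range A.card, w k :=
      Finset.sum_pos (fun i _ => hw0 i) (Finset.nonempty_range_iff.2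
        (Finset.card_pos.2 hne).ne')
    refine le_of_mul_le_mul_right ?_ hpos
    refine le_trans ?_ (h A)
    rw [Real.norm_eq_abs, ← abs_of_pos hpos, ← abs_mul,
      xs_formula w hw0 f hf]
    refine (Finset.abs_sum_le_sum_abs _ _).trans (Finset.sum_le_sum fun i _ => ?_)
    rw [abs_mul]
    exact mul_le_of_le_one_left (abs_nonneg _) (abs_signType_le _)

lemma coordF_eVec (w : ℕ → ℝ) (hw0 : ∀ k, 0 < w k) (k i : ℕ) :
    coordF w (eVec w hw0 k) i = if k = i then 1 else 0 := by
  have hw := (hw0 0).ne'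
  simp only [coordF, eVec, eFun, Finset.mem_singleton, Finset.card_singleton,
    Finset.sum_range_one]
  split_ifs
  · simp [hw]
  · simp

lemma eVec_mem (w : ℕ → ℝ) (hw0 : ∀ k, 0 < w k) (k : ℕ) : eVec w hw0 k ∈ XS w hw0 :=
  Submodule.le_topologicalClosure _ (Submodule.subset_span ⟨k, rfl⟩)

lemma xs_flat (w : ℕ → ℝ) (hw0 : ∀ k, 0 < w k)
    (hW : Tendsto (fun n => ∑ k ∈ Finset.range n, w k) atTop atTop)
    (f : Amb) (hf : f ∈ XS w hw0) (hf1 : ‖f‖ ≤ 1) :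
    ∃ δ : ℝ, 0 < δ ∧ ∃ n : ℕ, ∀ k, n ≤ k →
      ‖f + δ • eVec w hw0 k‖ ≤ 1 ∧ ‖f - δ • eVec w hw0 k‖ ≤ 1 := by
  have hWnn : ∀ A : Finset ℕ, 0 ≤ ∑ k ∈ Finset.range A.card, w k := fun A =>
    Finset.sum_nonneg fun i _ => (hw0 i).le
  have hc1 : ∀ A : Finset ℕ, ∑ i ∈ A, |coordF w f i| ≤ ∑ k ∈ Finset.range A.card, w k :=
    fun A => (xs_abs_le w hw0 f hf A).trans (mul_le_of_le_one_left (hWnn A) hf1)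
  have ht1 : Tendsto (fun i => f i) (comap (fun i : PredIdx => i.1.card) atTop) (𝓝 0) := by
    refine xs_tendsto w hw0 _ (fun k => ?_) f hf
    have h1 : Tendsto (fun i : PredIdx => 1 / ∑ j ∈ Finset.range i.1.card, w j)
        (comap (fun i : PredIdx => i.1.card) atTop) (𝓝 0) := by
      simp only [one_div]
      exact (tendsto_inv_atTop_zero.comp hW).comp tendsto_comap
    exact squeeze_zero_norm (eFun_abs_le w hw0 k) h1
  have ht2 : Tendsto (fun i => f i)
      (map (fun i : ℕ => (({i}, fun _ => 1) : PredIdx)) atTop) (𝓝 0) := by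
    refine xs_tendsto w hw0 _ (fun k => ?_) f hf
    rw [tendsto_map'_iff]
    refine tendsto_const_nhds.congr' ?_
    filter_upwards [eventually_gt_atTop k] with i hi
    simp [eFun, hi.ne]
  rw [tendsto_map'_iff] at ht2
  have hcn : Tendsto (fun i => |coordF w f i|) atTop (𝓝 0) := by
    have := (ht2.const_mul (w 0)).abs
    rw [mul_zero, abs_zero] at this
    exact this
  have h2 : ∃ N : ℕ, ∀ A : Finset ℕ, N ≤ A.card →
      ∑ i ∈ A, |coordF w f i| ≤ (∑ k ∈ Finset.range A.card, w k) / 2 := by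
    have h3 := Metric.tendsto_nhds.1 ht1 (1 / 2) (by norm_num)
    rw [eventually_comap] at h3
    obtain ⟨N, hN⟩ := eventually_atTop.1 h3
    refine ⟨N, fun A hA => ?_⟩
    rw [xs_abs w hw0 f hf]
    have h4 := hN _ hA (A, fun i => SignType.sign (coordF w f i)) rfl
    rw [Real.dist_eq, sub_zero] at h4
    have h5 := (le_abs_self _).trans h4.le
    have := mul_le_mul_of_nonneg_right h5 (hWnn A)
    linarith
  obtain ⟨δ, hδ, n, hn⟩ := flat_comb w hw0 _ (fun i => abs_nonneg _) hcn hc1 h2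
  have key : ∀ k, n ≤ k → ∀ d : ℝ, |d| ≤ δ → ‖f + d • eVec w hw0 k‖ ≤ 1 := by
    intro k hk d hd
    refine xs_norm_le w hw0 _ ((XS w hw0).add_mem hf ((XS w hw0).smul_mem _ (eVec_mem w hw0 k)))
      1 zero_le_one fun A => ?_
    rw [one_mul]
    have e1 : ∀ i, coordF w (f + d • eVec w hw0 k) i
        = coordF w f i + d * (if k = i then 1 else 0) := by
      intro i
      rw [← coordF_eVec w hw0 k i]
      simp only [coordF, lp.coeFn_add, lp.coeFn_smul, Pi.add_apply, Pi.smul_apply, smul_eq_mul]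
      ring
    have e2 : ∑ i ∈ A, |coordF w (f + d • eVec w hw0 k) i| ≤
        ∑ i ∈ A, |coordF w f i| + if k ∈ A then δ else 0 := by
      rw [← Finset.sum_ite_eq A k (fun _ => δ), ← Finset.sum_add_distrib]
      refine Finset.sum_le_sum fun i _ => ?_
      rw [e1]
      refine (abs_add_le _ _).trans ?_
      gcongr
      split_ifs
      · simpa using hd
      · simp
    refine e2.trans ?_
    split_ifs with h
    · exact hn k hk A h
    · simpa using hc1 A
  refine ⟨δ, hδ, n, fun k hk => ⟨key k hk δ (abs_of_pos hδ).le, ?_⟩⟩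
  have := key k hk (-δ) (by rw [abs_neg, abs_of_pos hδ])
  rwa [neg_smul, ← sub_eq_add_neg] at this

lemma antitone_avg (w : ℕ → ℝ) (hw : Antitone w) (q n : ℕ) (hqn : q ≤ n) :
    (q : ℝ) * ∑ k ∈ Finset.range n, w k ≤ n * ∑ k ∈ Finset.range q, w k := by
  induction n, hqn using Nat.le_induction with
  | base => exact le_rfl
  | succ n hn ih =>
    rw [Finset.sum_range_succ]
    push_cast
    have : (q : ℝ) * w n ≤ ∑ k ∈ Finset.range q, w k := by
      have := Finset.card_nsmul_le_sum (Finset.range q) w (w n)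
        (fun k hk => hw ((Finset.mem_range.1 hk).le.trans hn))
      simpa using this
    linarith

lemma coordF_sum (w : ℕ → ℝ) (hw0 : ∀ k, 0 < w k) (A : Finset ℕ) (v : ℕ → ℝ) (i : ℕ) :
    coordF w (∑ k ∈ A, v k • eVec w hw0 k) i = if i ∈ A then v i else 0 := by
  have : coordF w (∑ k ∈ A, v k • eVec w hw0 k) i =
      ∑ k ∈ A, v k * coordF w (eVec w hw0 k) i := by
    simp only [coordF, lp.coeFn_sum, Finset.sum_apply, lp.coeFn_smul, Pi.smul_apply, smul_eq_mul,
      Finset.mul_sum]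
    refine Finset.sum_congr rfl fun k _ => ?_
    ring
  rw [this]
  simp only [coordF_eVec, mul_ite, mul_one, mul_zero]
  exact Finset.sum_ite_eq' A i v

lemma xs_sign_norm (w : ℕ → ℝ) (hw : Antitone w) (hw0 : ∀ k, 0 < w k) (A : Finset ℕ)
    (hA : A.Nonempty) (s : ℕ → SignType) :
    ‖∑ k ∈ A, (s k : ℝ) • eVec w hw0 k‖ ≤ A.card / ∑ k ∈ Finset.range A.card, w k := by
  have hpos : 0 < ∑ k ∈ Finset.range A.card, w k :=
      Finset.sum_pos (fun i _ => hw0 i) (Finset.nonempty_range_iff.2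
        (Finset.card_pos.2 hA).ne')
  refine xs_norm_le w hw0 _ (Submodule.sum_mem _ fun k _ =>
    (XS w hw0).smul_mem _ (eVec_mem w hw0 k)) _ (by positivity) fun B => ?_
  have e1 : ∑ i ∈ B, |coordF w (∑ k ∈ A, (s k : ℝ) • eVec w hw0 k) i| ≤ ((B ∩ A).card : ℝ) := by
    have e2 : ((B ∩ A).card : ℝ) = ∑ i ∈ B, if i ∈ A then (1 : ℝ) else 0 := by
      rw [Finset.sum_ite_mem]; simp
    rw [e2]
    refine Finset.sum_le_sum fun i _ => ?_
    rw [coordF_sum]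
    split_ifs
    · exact abs_signType_le _
    · simp
  refine e1.trans ?_
  have e3 := antitone_avg w hw _ _ (Finset.card_le_card (Finset.inter_subset_right (s₁ := B)
    (s₂ := A)))
  have e4 : ∑ k ∈ Finset.range (B ∩ A).card, w k ≤ ∑ k ∈ Finset.range B.card, w k :=
    Finset.sum_le_sum_of_subset_of_nonneg (Finset.range_mono
      (Finset.card_le_card Finset.inter_subset_left)) fun i _ _ => (hw0 i).le
  rw [div_mul_eq_mul_div, le_div_iff₀ hpos]
  exact e3.trans (by gcongr)

/-- The unit vectors as elements of the space. -/
noncomputable def eX (w : ℕ → ℝ) (hw0 : ∀ k, 0 < w k) (k : ℕ) : XS w hw0 :=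
  ⟨eVec w hw0 k, eVec_mem w hw0 k⟩

lemma xs_weak (w : ℕ → ℝ) (hw : Antitone w) (hw0 : ∀ k, 0 < w k)
    (hW : Tendsto (fun n => ∑ k ∈ Finset.range n, w k) atTop atTop)
    (g : XS w hw0 →L[ℝ] ℝ) : Tendsto (fun k => g (eX w hw0 k)) atTop (𝓝 0) := by
  by_contra hcon
  rw [Metric.tendsto_atTop] at hcon
  push Not at hcon
  obtain ⟨η, hη, hfreq⟩ := hcon
  have hinf : {k | η ≤ |g (eX w hw0 k)|}.Infinite := by
    rw [Set.infinite_iff_exists_gt]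
    intro a
    obtain ⟨k, hk, hk2⟩ := hfreq (a + 1)
    rw [Real.dist_eq, sub_zero] at hk2
    exact ⟨k, hk2, by omega⟩
  have hbound : ∀ n : ℕ, 0 < n → η * ∑ k ∈ Finset.range n, w k ≤ ‖g‖ := by
    intro n hn
    obtain ⟨A, hAs, hAc⟩ := hinf.exists_subset_card_eq n
    have hAne : A.Nonempty := Finset.card_pos.1 (by omega)
    have hpos : 0 < ∑ k ∈ Finset.range A.card, w k :=
      Finset.sum_pos (fun i _ => hw0 i) (Finset.nonempty_range_iff.2
        (Finset.card_pos.2 hAne).ne')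
    let s : ℕ → SignType := fun k => SignType.sign (g (eX w hw0 k))
    have h1 : g (∑ k ∈ A, (s k : ℝ) • eX w hw0 k) = ∑ k ∈ A, |g (eX w hw0 k)| := by
      rw [map_sum]
      refine Finset.sum_congr rfl fun k _ => ?_
      rw [map_smul, smul_eq_mul]
      exact sign_mul_self _
    have h2 : (A.card : ℝ) * η ≤ ∑ k ∈ A, |g (eX w hw0 k)| := by
      have := Finset.card_nsmul_le_sum A (fun k => |g (eX w hw0 k)|) η (fun k hk => hAs hk)
      simpa using this
    have h3 : ‖∑ k ∈ A, (s k : ℝ) • eX w hw0 k‖ ≤ A.card / ∑ k ∈ Finset.range A.card, w k := by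
      have := xs_sign_norm w hw hw0 A hAne s
      rw [← Submodule.norm_coe]
      simpa [eX] using this
    have h4 := (le_abs_self _).trans (g.le_opNorm (∑ k ∈ A, (s k : ℝ) • eX w hw0 k))
    rw [h1] at h4
    have h5 := h2.trans (h4.trans (mul_le_mul_of_nonneg_left h3 g.opNorm_nonneg))
    rw [← mul_div_assoc, le_div_iff₀ hpos] at h5
    rw [← hAc]
    have hc : (0 : ℝ) < A.card := by exact_mod_cast Finset.card_pos.2 hAne
    refine le_of_mul_le_mul_left ?_ hc
    linarith
  obtain ⟨n, hn0, hn⟩ := ((eventually_gt_atTop 0).and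
    (hW.eventually_gt_atTop (‖g‖ / η))).exists
  have := hbound n hn0
  rw [div_lt_iff₀ hη] at hn
  linarith

lemma xs_operator {Y : Type} [NormedAddCommGroup Y] [NormedSpace ℝ Y] [CompleteSpace Y]
    (y : ℕ → Y) (w : ℕ → ℝ) (hw0 : ∀ k, 0 < w k)
    (hwy : ∀ (F : Finset ℕ) (v : ℕ → ℝ) (D : ℝ), 0 ≤ D →
      (∀ A ⊆ F, ∑ i ∈ A, |v i| ≤ D * ∑ k ∈ Finset.range A.card, w k) →
      ‖∑ i ∈ F, v i • y i‖ ≤ 2 * D) :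
    ∃ S : XS w hw0 →L[ℝ] Y, ∀ k, S (eX w hw0 k) = y k := by
  let f : (ℕ →₀ ℝ) →ₗ[ℝ] Y := Finsupp.linearCombination ℝ y
  let e : (ℕ →₀ ℝ) →ₗ[ℝ] XS w hw0 := Finsupp.linearCombination ℝ (eX w hw0)
  have he : ∀ v, (e v : Amb) = ∑ k ∈ v.support, v k • eVec w hw0 k := by
    intro v
    simp [e, Finsupp.linearCombination_apply, Finsupp.sum, eX]
  have hdense : DenseRange e := by
    intro x
    rw [Metric.mem_closure_iff]
    intro ε hε
    have hx : (x : Amb) ∈ closure ((Submodule.span ℝ (Set.range (eVec w hw0)) :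
      Submodule ℝ Amb) : Set Amb) := x.2
    obtain ⟨g, hg, hd⟩ := Metric.mem_closure_iff.1 hx ε hε
    obtain ⟨v, rfl⟩ := (Finsupp.mem_span_range_iff_exists_finsupp).1 hg
    refine ⟨e v, ⟨v, rfl⟩, ?_⟩
    rw [Subtype.dist_eq, he]
    exact hd
  have hnorm : ∃ C, ∀ v, ‖f v‖ ≤ C * ‖e v‖ := by
    refine ⟨2, fun v => ?_⟩
    have h1 := hwy v.support v ‖e v‖ (norm_nonneg _) ?_
    · simpa [f, Finsupp.linearCombination_apply, Finsupp.sum] using h1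
    · intro A hA
      have h2 := xs_abs_le w hw0 (e v : Amb) (e v).2 A
      rw [Submodule.norm_coe] at h2
      refine le_trans (le_of_eq ?_) h2
      refine Finset.sum_congr rfl fun i hi => ?_
      rw [he, coordF_sum, if_pos (hA hi)]
  refine ⟨f.extendOfNorm e, fun k => ?_⟩
  have h := LinearMap.extendOfNorm_eq hdense hnorm (Finsupp.single k 1)
  simpa [f, e] using h

lemma not_propertyB_generic {Y : Type} [NormedAddCommGroup Y] [NormedSpace ℝ Y]
    (hY : LocallyAMUC Y) (y : ℕ → Y) (hy : ∀ n, ‖y n‖ = 1)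
    {X : Type} [NormedAddCommGroup X] [NormedSpace ℝ X] [CompleteSpace X] (e : ℕ → X)
    (hflat : ∀ x : X, ‖x‖ ≤ 1 → ∃ δ : ℝ, 0 < δ ∧ ∃ n : ℕ, ∀ k, n ≤ k →
      ‖x + δ • e k‖ ≤ 1 ∧ ‖x - δ • e k‖ ≤ 1)
    (hweak : ∀ g : X →L[ℝ] ℝ, Tendsto (fun k => g (e k)) atTop (𝓝 0))
    (w₀ : ℝ) (hw₀ : 0 < w₀) (he : ∀ k, ‖e k‖ ≤ 1 / w₀)
    (S : X →L[ℝ] Y) (hSe : ∀ k, S (e k) = y k) : ¬ PropertyB Y := by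
  intro hB
  have hd : Dense (NormAttainingOps X Y) := hB X _ _ inferInstance
  obtain ⟨T, hT, hST⟩ := Metric.dense_iff.1 hd S (w₀ / 2) (by positivity)
  have hT0 := na_tendsto_zero hY e hflat hweak T hST
  obtain ⟨k, hk⟩ := (Metric.tendsto_nhds.1 hT0 (1 / 2) (by norm_num)).exists
  rw [dist_zero_right] at hk
  rw [Metric.mem_ball, dist_eq_norm] at hT
  have h1 := (T - S).le_opNorm (e k)
  have h3 : ‖T - S‖ * ‖e k‖ ≤ (w₀ / 2) * (1 / w₀) := by
    gcongr
    exact he k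
  have h4 : (w₀ / 2) * (1 / w₀) = 1 / 2 := by field_simp
  rw [sub_apply, hSe] at h1
  have h5 := norm_sub_norm_le (y k) (T (e k))
  rw [hy, norm_sub_rev] at h5
  linarith

lemma not_propertyB_of_smallSums {Y : Type} [NormedAddCommGroup Y] [NormedSpace ℝ Y]
    [CompleteSpace Y] (hY : LocallyAMUC Y) (y : ℕ → Y) (hy : ∀ n, ‖y n‖ = 1)
    (hS : SmallSums y) : ¬ PropertyB Y := by
  obtain ⟨w, hw, hw0, hW, hwy⟩ := exists_weights y hy hS
  obtain ⟨S, hSe⟩ := xs_operator y w hw0 hwy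
  have hcomp : CompleteSpace (XS w hw0) :=
    (Submodule.isClosed_topologicalClosure _).completeSpace_coe
  refine not_propertyB_generic hY y hy (eX w hw0) ?_ (xs_weak w hw hw0 hW) (w 0) (hw0 0)
    (eVec_norm_le w hw0) S hSe
  intro x hx
  obtain ⟨δ, hδ, n, hn⟩ := xs_flat w hw0 hW x x.2 hx
  exact ⟨δ, hδ, n, fun k hk => hn k hk⟩

/-- Theorem A: a locally AMUC Banach space `Y` having either a normalized
symmetric basic sequence not equivalent to the unit vector basis of `ℓ₁`, or a normalized
sequence with upper `p`-estimates for some `1 < p < ∞`, fails Lindenstrauss' property B. -/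
theorem locallyAMUC_fails_propertyB (Y : Type) [NormedAddCommGroup Y] [NormedSpace ℝ Y]
    [CompleteSpace Y] (hY : LocallyAMUC Y)
    (h : (∃ y : ℕ → Y, (∀ n, ‖y n‖ = 1) ∧ IsSymmetricBasicSeq y ∧ ¬ EquivL1UnitBasis y) ∨
      (∃ p : ℝ, 1 < p ∧ ∃ y : ℕ → Y, (∀ n, ‖y n‖ = 1) ∧ HasUpperPEstimates p y)) :
    ¬ PropertyB Y := by
  rcases h with ⟨y, hy, hs, hne⟩ | ⟨p, hp, y, hy, hup⟩
  · obtain ⟨K, hK0, hK⟩ := basis_constant y hy hs.1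
    obtain ⟨M, hM0, hM⟩ := uniform_symm y hy K hK0 hK (fun σ => (hs.2 σ).2)
    exact not_propertyB_of_smallSums hY y hy (smallSums_of_symm y K hK0 hK M hM0 hM hne)
  · exact not_propertyB_of_smallSums hY y hy (smallSums_of_upper y p hp hup)
end

section
/- Let Y be a Banach space that does not contain an isomorphic copy of ℓ_1. Suppose that for every y in the unit sphere S_Y and every t > 0 there exists δ > 0 such that limsup_n max{‖y + t z_n‖, ‖y − t z_n‖} ≥ 1 + δ for every weakly null sequence (z_n) in Y with ‖z_n‖ ≥ 1 for all n. Then Y is locally AMUC. -/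
open Filter Topology

namespace RosenthalAux

inductive Bad {Y : Type*} (U : Ultrafilter Y) (F : List Y → Prop) : List Y → Prop
  | out (σ : List Y) (h : ¬ F σ) : Bad U F σ
  | step (σ : List Y) (S : Set Y) (hS : S ∈ U) (h : ∀ x ∈ S, Bad U F (σ ++ [x])) : Bad U F σ

theorem bad_tree {Y : Type*} {U : Ultrafilter Y} {F : List Y → Prop} {σ : List Y}
    (h : Bad U F σ) : ∃ T : List Y → Set Y, (∀ τ, T τ ∈ U) ∧
      ∀ m : ℕ → Y, (∀ j, m j ∈ T ((List.range j).map m)) →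
        ∃ k, ¬ F (σ ++ (List.range k).map m) := by
  induction h with
  | out σ h => exact ⟨fun _ => Set.univ, fun _ => Filter.univ_mem, fun m _ => ⟨0, by simpa using h⟩⟩
  | step σ S hS h ih =>
    classical
    choose T hT hm using ih
    refine ⟨fun τ => match τ with
      | [] => S
      | x :: τ => if hx : x ∈ S then T x hx τ else Set.univ, ?_, ?_⟩
    · intro τ
      match τ with
      | [] => exact hS
      | x :: τ =>
        by_cases hx : x ∈ S
        · simpa [hx] using hT x hx τ
        · simp only [hx, dite_false]
          exact Filter.univ_mem
    · intro m hmm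
      have h0 : m 0 ∈ S := by simpa using hmm 0
      obtain ⟨k, hk⟩ := hm (m 0) h0 (fun j => m (j + 1)) (by
        intro j
        have := hmm (j + 1)
        rw [List.range_succ_eq_map] at this
        simpa [h0, Function.comp_def] using this)
      refine ⟨k + 1, ?_⟩
      rw [List.range_succ_eq_map]
      simpa [Function.comp_def] using hk

theorem range_map_sublist (φ : ℕ → ℕ) (hφ : StrictMono φ) (j : ℕ) :
    ((List.range j).map φ).Sublist (List.range (φ j)) := by
  induction j with
  | zero => simp
  | succ j ih =>
    rw [List.range_succ, List.map_append]
    have h1 : ((List.range j).map φ ++ [φ j]).Sublist (List.range (φ j + 1)) := by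
      rw [List.range_succ]
      exact ih.append (List.Sublist.refl _)
    exact h1.trans (List.range_sublist.2 (hφ (Nat.lt_succ_self j)))

theorem diag {Y : Type*} (U : Ultrafilter Y) (T : ℕ → List Y → Set Y)
    (hT : ∀ i σ, T i σ ∈ U) : ∃ m : ℕ → Y, ∀ i, ∀ φ : ℕ → ℕ, StrictMono φ → i ≤ φ 0 →
      ∀ j, m (φ j) ∈ T i ((List.range j).map (fun l => m (φ l))) := by
  have key : ∀ L : List Y, ∃ x, ∀ i ≤ L.length, ∀ σ : List Y, σ.Sublist L → x ∈ T i σ := by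
    intro L
    have : (⋂ i ∈ Set.Iic L.length, ⋂ σ ∈ {σ : List Y | σ ∈ L.sublists}, T i σ) ∈ (U : Filter Y) := by
      rw [Filter.biInter_mem (Set.finite_Iic _)]
      intro i _
      rw [Filter.biInter_mem (List.finite_toSet _)]
      intro σ _
      exact hT i σ
    obtain ⟨x, hx⟩ := U.nonempty_of_mem this
    refine ⟨x, fun i hi σ hσ => ?_⟩
    simp only [Set.mem_iInter] at hx
    exact hx i hi σ (List.mem_sublists.2 hσ)
  choose c hc using key
  let L : ℕ → List Y := fun k => Nat.rec [] (fun _ l => l ++ [c l]) k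
  have hL : ∀ k, L k = (List.range k).map (fun j => c (L j)) := by
    intro k
    induction k with
    | zero => rfl
    | succ k ih =>
      rw [List.range_succ, List.map_append, ← ih]
      rfl
  refine ⟨fun j => c (L j), fun i φ hφ hi j => ?_⟩
  apply hc
  · rw [hL]
    simp only [List.length_map, List.length_range]
    exact hi.trans (hφ.monotone (Nat.zero_le j))
  · rw [hL (φ j)]
    have := (range_map_sublist φ hφ j).map (fun j => c (L j))
    simpa [Function.comp_def] using this

section
variable {Y : Type*} [NormedAddCommGroup Y] [NormedSpace ℝ Y]

def Alt (a b : ℝ) (σ : List Y) : Prop :=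
  ∃ f : Y →L[ℝ] ℝ, ‖f‖ ≤ 1 ∧ ∀ j (hj : j < σ.length),
    (j % 2 = 0 → f σ[j] < a) ∧ (j % 2 = 1 → b < f σ[j])

theorem l1_of_indep [CompleteSpace Y] (x : ℕ → Y) (hx : ∀ n, ‖x n‖ ≤ 1) (a b : ℝ) (hab : a < b)
    (H : ∀ (s : ℕ → Prop) (k : ℕ), ∃ f : Y →L[ℝ] ℝ, ‖f‖ ≤ 1 ∧ ∀ i < k,
      (s i → b < f (x i)) ∧ (¬ s i → f (x i) < a)) :
    ∃ T : lp (fun _ : ℕ => ℝ) 1 →L[ℝ] Y, ∃ c : ℝ, 0 < c ∧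
      ∀ x : lp (fun _ : ℕ => ℝ) 1, c * ‖x‖ ≤ ‖T x‖ := by
  have est : ∀ (c : ℕ → ℝ) (k : ℕ), (b - a) / 2 * ∑ i ∈ Finset.range k, |c i| ≤
      ‖∑ i ∈ Finset.range k, c i • x i‖ := by
    intro c k
    obtain ⟨f, hf, hf'⟩ := H (fun i => 0 ≤ c i) k
    obtain ⟨g, hg, hg'⟩ := H (fun i => ¬ 0 ≤ c i) k
    have h1 : (b - a) * ∑ i ∈ Finset.range k, |c i| ≤ (f - g) (∑ i ∈ Finset.range k, c i • x i) := by
      rw [Finset.mul_sum, map_sum]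
      apply Finset.sum_le_sum
      intro i hi
      have hi := Finset.mem_range.1 hi
      obtain ⟨p1, p2⟩ := hf' i hi
      obtain ⟨q1, q2⟩ := hg' i hi
      simp only [map_smul, smul_eq_mul, sub_apply]
      by_cases hc : 0 ≤ c i
      · rw [abs_of_nonneg hc]
        have := p1 hc
        have := q2 (not_not.2 hc)
        nlinarith
      · have := p2 hc
        have := q1 hc
        rw [abs_of_neg (not_le.1 hc)]
        nlinarith
    have h2 : ‖f - g‖ ≤ 2 := (norm_sub_le _ _).trans (by linarith)
    have h3 := (le_abs_self _).trans ((f - g).le_opNorm (∑ i ∈ Finset.range k, c i • x i))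
    have h4 := mul_le_mul_of_nonneg_right h2 (norm_nonneg (∑ i ∈ Finset.range k, c i • x i))
    linarith
  have hs : ∀ c : lp (fun _ : ℕ => ℝ) 1, HasSum (fun i => |c i|) ‖c‖ := by
    intro c
    have := lp.hasSum_norm (p := 1) (by simp) c
    simpa using this
  have hsum : ∀ c : lp (fun _ : ℕ => ℝ) 1, Summable (fun i => c i • x i) := by
    intro c
    refine Summable.of_norm_bounded (hs c).summable (fun i => ?_)
    rw [norm_smul, Real.norm_eq_abs]
    exact mul_le_of_le_one_right (abs_nonneg _) (hx i)
  let T0 : lp (fun _ : ℕ => ℝ) 1 →ₗ[ℝ] Y :=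
    { toFun := fun c => ∑' i, c i • x i
      map_add' := fun c d => by
        rw [← (hsum c).tsum_add (hsum d)]
        congr 1; ext i; simp [add_smul]
      map_smul' := fun r c => by
        simp only [RingHom.id_apply]
        rw [← (hsum c).tsum_const_smul]
        congr 1; ext i; simp [mul_smul] }
  refine ⟨T0.mkContinuous 1 ?_, (b - a) / 2, by linarith, ?_⟩
  · intro c
    rw [one_mul]
    refine tsum_of_norm_bounded (hs c) (fun i => ?_)
    rw [norm_smul, Real.norm_eq_abs]
    exact mul_le_of_le_one_right (abs_nonneg _) (hx i)
  · intro c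
    exact le_of_tendsto_of_tendsto' ((hs c).tendsto_sum_nat.const_mul _)
      (hsum c).hasSum.tendsto_sum_nat.norm (fun k => est c k)

theorem l1_of_alt [CompleteSpace Y] (m : ℕ → Y) (hm : ∀ n, ‖m n‖ ≤ 1) (a b : ℝ) (hab : a < b)
    (H : ∀ φ : ℕ → ℕ, StrictMono φ → ∀ k, Alt a b ((List.range k).map (fun l => m (φ l)))) :
    ∃ T : lp (fun _ : ℕ => ℝ) 1 →L[ℝ] Y, ∃ c : ℝ, 0 < c ∧
      ∀ x : lp (fun _ : ℕ => ℝ) 1, c * ‖x‖ ≤ ‖T x‖ := by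
  classical
  refine l1_of_indep (fun i => m (3 * i + 1)) (fun n => hm _) a b hab (fun s k => ?_)
  obtain ⟨f, hf, hf'⟩ := H (fun j => 3 * (j / 2) + j % 2 + (if s (j / 2) then 0 else 1)) (by
    apply strictMono_nat_of_lt_succ
    intro j
    rcases Nat.mod_two_eq_zero_or_one j with h | h
    · have h1 : (j + 1) / 2 = j / 2 := by omega
      rw [h1]
      omega
    · split_ifs <;> omega) (2 * k)
  refine ⟨f, hf, fun i hi => ⟨fun hsi => ?_, fun hsi => ?_⟩⟩
  · have := (hf' (2 * i + 1) (by simp; omega)).2 (by omega)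
    have e1 : (2 * i + 1) / 2 = i := by omega
    have e2 : (2 * i + 1) % 2 = 1 := by omega
    simpa [e1, e2, hsi] using this
  · have := (hf' (2 * i) (by simp; omega)).1 (by omega)
    have e1 : (2 * i) / 2 = i := by omega
    have e2 : (2 * i) % 2 = 0 := by omega
    simpa [e1, e2, hsi] using this

/-- Rosenthal's theorem, ultrafilter form. -/
theorem rosenthal [CompleteSpace Y]
    (hl1 : ¬ ∃ T : lp (fun _ : ℕ => ℝ) 1 →L[ℝ] Y, ∃ c : ℝ, 0 < c ∧
      ∀ x : lp (fun _ : ℕ => ℝ) 1, c * ‖x‖ ≤ ‖T x‖)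
    (U : Ultrafilter Y) (A : List Y → Set Y) (hA : ∀ σ, A σ ∈ U)
    (hA1 : ∀ σ, ∀ x ∈ A σ, ‖x‖ ≤ 1) :
    ∃ m : ℕ → Y, (∀ φ : ℕ → ℕ, StrictMono φ →
      ∀ j, m (φ j) ∈ A ((List.range j).map (fun l => m (φ l)))) ∧
      ∀ f : Y →L[ℝ] ℝ, ∃ c, Tendsto (fun n => f (m n)) atTop (𝓝 c) := by
  classical
  have hbad : ∀ a b : ℝ, a < b → Bad U (Alt a b) ([] : List Y) := by
    intro a b hab
    by_contra hb
    apply hl1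
    obtain ⟨m, hm⟩ := diag U (fun _ σ => A σ ∩ {x | ¬ Bad U (Alt a b) σ → ¬ Bad U (Alt a b) (σ ++ [x])})
      (by
        intro _ σ
        refine Filter.inter_mem (hA σ) ?_
        by_cases hσ : Bad U (Alt a b) σ
        · simp [hσ]
        · by_contra hc
          have hc := Ultrafilter.compl_mem_iff_notMem.2 hc
          refine hσ (Bad.step σ _ hc ?_)
          intro x hx
          simpa [hσ] using hx)
    refine l1_of_alt m (fun n => hA1 _ _ (hm 0 (fun j => n + j) (by intro i j h; simpa using h)
      (Nat.zero_le _) 0).1) a b hab ?_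
    intro φ hφ k
    have : ¬ Bad U (Alt a b) ((List.range k).map (fun l => m (φ l))) := by
      induction k with
      | zero => simpa using hb
      | succ k ih =>
        rw [List.range_succ, List.map_append]
        exact (hm 0 φ hφ (Nat.zero_le _) k).2 ih
    by_contra h
    exact this (Bad.out _ h)
  choose T hT hT' using fun a b hab => bad_tree (hbad a b hab)
  obtain ⟨p, hp⟩ := exists_surjective_nat (ℚ × ℚ)
  obtain ⟨m, hm⟩ := diag U (fun i σ => A σ ∩
    (if h : ((p i).1 : ℝ) < ((p i).2 : ℝ) then T _ _ h σ else Set.univ)) (by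
      intro i σ
      refine Filter.inter_mem (hA σ) ?_
      split_ifs with h
      · exact hT _ _ h σ
      · exact Filter.univ_mem)
  have hm1 : ∀ n, ‖m n‖ ≤ 1 := fun n => hA1 _ _ (hm 0 (fun j => n + j)
      (by intro i j h; simpa using h) (Nat.zero_le _) 0).1
  have hball : ∀ f : Y →L[ℝ] ℝ, ‖f‖ ≤ 1 → ∃ c, Tendsto (fun n => f (m n)) atTop (𝓝 c) := by
    intro f hf
    have hb : ∀ n, |f (m n)| ≤ 1 := fun n => (f.le_opNorm (m n)).trans
      (mul_le_one₀ hf (norm_nonneg _) (hm1 n))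
    refine tendsto_of_no_upcrossings (s := Set.range ((↑) : ℚ → ℝ)) Rat.denseRange_cast ?_
      (isBoundedUnder_of ⟨1, fun n => (abs_le.1 (hb n)).2⟩)
      (isBoundedUnder_of ⟨-1, fun n => (abs_le.1 (hb n)).1⟩)
    rintro _ ⟨a, rfl⟩ _ ⟨b, rfl⟩ hab ⟨h1, h2⟩
    obtain ⟨i, hi⟩ := hp (a, b)
    obtain ⟨φ, hφ, hP⟩ := extraction_forall_of_frequently
      (P := fun j n => i ≤ n ∧ (j % 2 = 0 → f (m n) < a) ∧ (j % 2 = 1 → b < f (m n))) (by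
        intro j
        rcases Nat.mod_two_eq_zero_or_one j with h | h
        · exact (h1.and_eventually (eventually_ge_atTop i)).mono (fun n hn => ⟨hn.2, fun _ => hn.1, by omega⟩)
        · exact (h2.and_eventually (eventually_ge_atTop i)).mono (fun n hn => ⟨hn.2, by omega, fun _ => hn.1⟩))
    have hmi := hm i φ hφ (hP 0).1
    rw [hi] at hmi
    simp only [hab, dite_true] at hmi
    obtain ⟨k, hk⟩ := hT' _ _ hab (fun l => m (φ l)) (fun j => (hmi j).2)
    apply hk
    refine ⟨f, hf, fun j hj => ?_⟩
    simpa using (hP j).2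
  refine ⟨m, fun φ hφ j => (hm 0 φ hφ (Nat.zero_le _) j).1, fun f => ?_⟩
  have hpos : 0 < ‖f‖ + 1 := by positivity
  obtain ⟨c, hc⟩ := hball ((‖f‖ + 1)⁻¹ • f) (by
    rw [norm_smul, norm_inv, Real.norm_of_nonneg hpos.le, inv_mul_le_iff₀ hpos]
    linarith)
  refine ⟨(‖f‖ + 1) * c, (hc.const_mul (‖f‖ + 1)).congr (fun n => ?_)⟩
  simp only [smul_apply, smul_eq_mul]
  field_simp

/-- main selection -/
theorem select [CompleteSpace Y]
    (hl1 : ¬ ∃ T : lp (fun _ : ℕ => ℝ) 1 →L[ℝ] Y, ∃ c : ℝ, 0 < c ∧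
      ∀ x : lp (fun _ : ℕ => ℝ) 1, c * ‖x‖ ≤ ‖T x‖)
    (C : Set Y) (hC : ∀ s : Finset (Y →L[ℝ] ℝ), ∃ z ∈ C, ‖z‖ = 1 ∧ ∀ f ∈ s, f z = 0) :
    ∃ m : ℕ → Y, (∀ n, m n ∈ C) ∧ (∀ n, 1 ≤ ‖m (n + 1) - m n‖) ∧
      ∀ f : Y →L[ℝ] ℝ, Tendsto (fun n => f (m (n + 1) - m n)) atTop (𝓝 0) := by
  classical
  let B : Finset (Y →L[ℝ] ℝ) → Set Y := fun s => {z | z ∈ C ∧ ‖z‖ = 1 ∧ ∀ f ∈ s, f z = 0}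
  have hne : (⨅ s, Filter.principal (B s)).NeBot := by
    apply iInf_neBot_of_directed'
    · intro s t
      refine ⟨s ∪ t, ?_, ?_⟩ <;>
      · simp only [ge_iff_le, le_principal_iff, mem_principal]
        intro z hz
        exact ⟨hz.1, hz.2.1, fun f hf => hz.2.2 f (by simp [hf])⟩
    · intro s
      obtain ⟨z, h1, h2⟩ := hC s
      exact principal_neBot_iff.2 ⟨z, h1, h2⟩
  let U := Ultrafilter.of (⨅ s, Filter.principal (B s))
  have hU : ∀ s, B s ∈ U := fun s =>
    Ultrafilter.of_le _ (mem_iInf_of_mem s (mem_principal_self _))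
  have hg : ∀ x : Y, ∃ g : Y →L[ℝ] ℝ, ‖g‖ ≤ 1 ∧ g x = ‖x‖ := fun x => by
    simpa using exists_dual_vector'' ℝ x
  choose g hg1 hg2 using hg
  obtain ⟨m, hm, hc⟩ := rosenthal hl1 U (fun σ => B (σ.map g).toFinset) (fun σ => hU _)
    (fun σ x hx => hx.2.1.le)
  have hm1 : ∀ n, m n ∈ C ∧ ‖m n‖ = 1 ∧ g (m n) (m (n + 1)) = 0 := by
    intro n
    have h0 := hm (fun j => n + j) (by intro i j h; simpa using h) 0
    have h1 := hm (fun j => n + j) (by intro i j h; simpa using h) 1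
    exact ⟨h0.1, h0.2.1, h1.2.2 _ (by simp)⟩
  refine ⟨m, fun n => (hm1 n).1, fun n => ?_, fun f => ?_⟩
  · have h1 := (g (m n)).le_opNorm (m (n + 1) - m n)
    rw [map_sub, (hm1 n).2.2, hg2, (hm1 n).2.1] at h1
    have h2 := mul_le_mul_of_nonneg_right (hg1 (m n)) (norm_nonneg (m (n + 1) - m n))
    norm_num at h1
    linarith
  · obtain ⟨c, hc⟩ := hc f
    have := (hc.comp (tendsto_add_atTop_nat 1)).sub hc
    simpa [Function.comp_def] using this

end

end RosenthalAux

/-- If a Banach space `Y` contains no isomorphic copy of `ℓ₁` and for every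
`y ∈ S_Y` and `t > 0` there is `δ > 0` with
`limsup max {‖y + t zₙ‖, ‖y - t zₙ‖} ≥ 1 + δ` for every weakly null sequence `(zₙ)` with
`‖zₙ‖ ≥ 1` for all `n`, then `Y` is locally AMUC. -/
theorem locallyAMUC_of_limsup (Y : Type*) [NormedAddCommGroup Y] [NormedSpace ℝ Y]
    [CompleteSpace Y]
    (hl1 : ¬ ∃ T : lp (fun _ : ℕ => ℝ) 1 →L[ℝ] Y, ∃ c : ℝ, 0 < c ∧
      ∀ x : lp (fun _ : ℕ => ℝ) 1, c * ‖x‖ ≤ ‖T x‖)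
    (h : ∀ y : Y, ‖y‖ = 1 → ∀ t : ℝ, 0 < t → ∃ δ : ℝ, 0 < δ ∧
      ∀ z : ℕ → Y,
        (∀ f : Y →L[ℝ] ℝ, Tendsto (fun n => f (z n)) atTop (𝓝 0)) →
        (∀ n : ℕ, 1 ≤ ‖z n‖) →
        1 + δ ≤ limsup (fun n => max ‖y + t • z n‖ ‖y - t • z n‖) atTop) :
    LocallyAMUC Y := by
  intro y hy t ht
  by_contra hneg
  have hbelow : ∀ E : Submodule ℝ Y, BddBelow {m : ℝ | ∃ z : Y, z ∈ E ∧ ‖z‖ = 1 ∧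
      m = max ‖y + t • z‖ ‖y - t • z‖} := by
    rintro E
    refine ⟨0, ?_⟩
    rintro _ ⟨z, _, _, rfl⟩
    exact (norm_nonneg _).trans (le_max_left _ _)
  have hab : BddAbove {r : ℝ | ∃ E : Submodule ℝ Y, IsClosed (E : Set Y) ∧
      FiniteDimensional ℝ (Y ⧸ E) ∧
      r = sInf {m : ℝ | ∃ z : Y, z ∈ E ∧ ‖z‖ = 1 ∧ m = max ‖y + t • z‖ ‖y - t • z‖} - 1} := by
    refine ⟨t, ?_⟩
    rintro _ ⟨E, _, _, rfl⟩
    rcases Set.eq_empty_or_nonempty {m : ℝ | ∃ z : Y, z ∈ E ∧ ‖z‖ = 1 ∧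
      m = max ‖y + t • z‖ ‖y - t • z‖} with he | ⟨m, hm⟩
    · rw [he, Real.sInf_empty]
      linarith
    · have h1 := csInf_le (hbelow E) hm
      obtain ⟨z, _, hz, rfl⟩ := hm
      have h2 : ‖t • z‖ = t := by rw [norm_smul, hz, Real.norm_of_nonneg ht.le, mul_one]
      have h3 : max ‖y + t • z‖ ‖y - t • z‖ ≤ 1 + t := by
        apply max_le
        · exact (norm_add_le _ _).trans (by rw [hy, h2])
        · exact (norm_sub_le _ _).trans (by rw [hy, h2])
      linarith
  have hle : ∀ E : Submodule ℝ Y, IsClosed (E : Set Y) → FiniteDimensional ℝ (Y ⧸ E) →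
      sInf {m : ℝ | ∃ z : Y, z ∈ E ∧ ‖z‖ = 1 ∧ m = max ‖y + t • z‖ ‖y - t • z‖} ≤ 1 := by
    intro E h1 h2
    have := le_csSup hab ⟨E, h1, h2, rfl⟩
    have h3 := not_lt.1 hneg
    unfold deltaTilde at h3
    linarith
  have hinf : ¬ FiniteDimensional ℝ Y := by
    intro hfd
    have h1 := hle (Submodule.span ℝ {y}) (Submodule.closed_of_finiteDimensional _) inferInstance
    have h2 : 1 + t ≤ sInf {m : ℝ | ∃ z : Y, z ∈ Submodule.span ℝ {y} ∧ ‖z‖ = 1 ∧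
        m = max ‖y + t • z‖ ‖y - t • z‖} := by
      apply le_csInf
      · exact ⟨_, y, Submodule.mem_span_singleton_self y, hy, rfl⟩
      · rintro _ ⟨z, hz, hz1, rfl⟩
        obtain ⟨r, rfl⟩ := Submodule.mem_span_singleton.1 hz
        rw [norm_smul, hy, mul_one, Real.norm_eq_abs] at hz1
        have e1 : y + t • r • y = (1 + t * r) • y := by module
        have e2 : y - t • r • y = (1 - t * r) • y := by module
        rw [e1, e2, norm_smul, norm_smul, hy, mul_one, mul_one, Real.norm_eq_abs, Real.norm_eq_abs]
        rcases (abs_eq zero_le_one).1 hz1 with rfl | rfl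
        · exact le_max_of_le_left (by rw [mul_one]; exact le_abs_self _)
        · exact le_max_of_le_right (le_trans (by linarith) (le_abs_self _))
    linarith
  obtain ⟨δ, hδ, hz⟩ := h y hy (t / 2) (by positivity)
  obtain ⟨m, hm, hm1, hm2⟩ := RosenthalAux.select hl1
    {z | max ‖y + t • z‖ ‖y - t • z‖ < 1 + δ / 2} (by
      intro s
      let L : Y →L[ℝ] (s → ℝ) := ContinuousLinearMap.pi (fun f => f.1)
      let E : Submodule ℝ Y := LinearMap.ker (L : Y →ₗ[ℝ] (s → ℝ))
      have hEc : IsClosed (E : Set Y) := L.isClosed_ker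
      have hEf : FiniteDimensional ℝ (Y ⧸ E) :=
        Module.Finite.equiv (LinearMap.quotKerEquivRange (L : Y →ₗ[ℝ] (s → ℝ))).symm
      have hEmem : ∀ z ∈ E, ∀ f ∈ s, f z = 0 := by
        intro z hz f hf
        have : L z = 0 := hz
        exact congrFun this ⟨f, hf⟩
      have hne : ∃ z ∈ E, ‖z‖ = 1 := by
        have hEb : E ≠ ⊥ := by
          intro hb
          rw [hb] at hEf
          exact hinf (Module.Finite.equiv (Submodule.quotEquivOfEqBot (⊥ : Submodule ℝ Y) rfl))
        obtain ⟨z, hzE, hz0⟩ := Submodule.exists_mem_ne_zero_of_ne_bot hEb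
        refine ⟨‖z‖⁻¹ • z, E.smul_mem _ hzE, ?_⟩
        rw [norm_smul, norm_inv, norm_norm, inv_mul_cancel₀ (norm_ne_zero_iff.2 hz0)]
      obtain ⟨z0, hz0, hz0'⟩ := hne
      obtain ⟨_, ⟨z, hzE, hz1, rfl⟩, hlt⟩ := exists_lt_of_csInf_lt
        (⟨_, z0, hz0, hz0', rfl⟩ : {m : ℝ | ∃ z : Y, z ∈ E ∧ ‖z‖ = 1 ∧
          m = max ‖y + t • z‖ ‖y - t • z‖}.Nonempty)
        (lt_of_le_of_lt (hle E hEc hEf) (by linarith : (1 : ℝ) < 1 + δ / 2))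
      exact ⟨z, hlt, hz1, hEmem z hzE⟩)
  simp only [Set.mem_setOf_eq] at hm
  have hfin := hz (fun n => m (n + 1) - m n) hm2 hm1
  have hup : limsup (fun n => max ‖y + (t / 2) • (m (n + 1) - m n)‖
      ‖y - (t / 2) • (m (n + 1) - m n)‖) atTop ≤ 1 + δ / 2 := by
    refine limsup_le_of_le (isCoboundedUnder_le_of_le atTop (x := 0)
      (fun n => (norm_nonneg _).trans (le_max_left _ _))) (Eventually.of_forall (fun n => ?_))
    obtain ⟨a1, a2⟩ := max_lt_iff.1 (hm n)
    obtain ⟨b1, b2⟩ := max_lt_iff.1 (hm (n + 1))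
    have e1 : y + (t / 2) • (m (n + 1) - m n) =
        (1 / 2 : ℝ) • ((y + t • m (n + 1)) + (y - t • m n)) := by module
    have e2 : y - (t / 2) • (m (n + 1) - m n) =
        (1 / 2 : ℝ) • ((y - t • m (n + 1)) + (y + t • m n)) := by module
    have hh : ‖(1 / 2 : ℝ)‖ = 1 / 2 := by norm_num
    apply max_le
    · rw [e1, norm_smul, hh]
      have := norm_add_le (y + t • m (n + 1)) (y - t • m n)
      linarith
    · rw [e2, norm_smul, hh]
      have := norm_add_le (y - t • m (n + 1)) (y + t • m n)
      linarith
  linarith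
end
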